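/- arXiv:1607.08463 — 2 statements merged into one kernel-verified Lean document; each statement's English description precedes it below -/
import Mathlib

section
/- For every pair of points p, q ∈ ℝ², the infimum d̄_F(p,q) := inf{ E(γ) : γ : [a,b] → ℝ² locally Lipschitz, γ(a) = p, γ(b) = q } is attained, i.e. there exists a (not necessarily unique) locally Lipschitz curve γ joining p to q with E(γ) = d̄_F(p,q). -/
open MeasureTheory Set Filter Topology
open scoped ENNReal

noncomputable section

/-- The Euclidean norm of a vector in `ℝ × ℝ`. -/
def enorm2 (v : ℝ × ℝ) : ℝ := Real.sqrt (v.1 ^ 2 + v.2 ^ 2)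

/-- The degenerate length `E(γ) = ∫ₐᵇ F(γ(t)) |γ'(t)| dt` of a planar curve. -/
def degLen (F : ℝ × ℝ → ℝ) (a b : ℝ) (γ : ℝ → ℝ × ℝ) : ℝ :=
  ∫ t in a..b, F (γ t) * enorm2 (deriv γ t)

/-- The signed area `𝒜(γ) = ∫ₐᵇ γ¹(t) (γ²)'(t) dt` of a planar curve. -/
def sArea (a b : ℝ) (γ : ℝ → ℝ × ℝ) : ℝ :=
  ∫ t in a..b, (γ t).1 * deriv (fun s => (γ s).2) t

/-- A locally Lipschitz curve on `[a,b]` joining `p` to `q`. -/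
def IsCurve (a b : ℝ) (γ : ℝ → ℝ × ℝ) (p q : ℝ × ℝ) : Prop :=
  a ≤ b ∧ LocallyLipschitz γ ∧ γ a = p ∧ γ b = q

/-- The standing hypotheses on the potential `W`: smooth, nonnegative, vanishing exactly at the
two distinct wells `pm` and `pp`, with positive definite Hessians there, and bounded away from
zero near infinity (`liminf_{|p|→∞} W(p) > 0`). -/
structure TwoWell (W : ℝ × ℝ → ℝ) (pm pp : ℝ × ℝ) : Prop where
  smooth : ContDiff ℝ (⊤ : ℕ∞) W
  nonneg : ∀ p, 0 ≤ W p
  wells_ne : pm ≠ pp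
  zeroSet : ∀ p, W p = 0 ↔ p = pm ∨ p = pp
  hess_m : ∀ v : ℝ × ℝ, v ≠ 0 → 0 < iteratedFDeriv ℝ 2 W pm ![v, v]
  hess_p : ∀ v : ℝ × ℝ, v ≠ 0 → 0 < iteratedFDeriv ℝ 2 W pp ![v, v]
  coercive : ∃ c > 0, ∃ R : ℝ, ∀ p : ℝ × ℝ, R ≤ ‖p‖ → c ≤ W p

/-!
Let `F` be continuous, positive off finitely many wells, comparable to the distance to each well
near it, and bounded away from zero at infinity. For `ε > 0` the factor `F + ε` is bounded below,
so curves of bounded energy have bounded length and, by compactness, `F + ε` has a geodesic. It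
remains to bound the length of these geodesics uniformly in `ε`, for then curves of bounded length
minimize the energy of `F`, and compactness applies again.

Let `w` be a well, `γ` a geodesic of `F + ε`, and `s` a time at which `γ` is closest to `w`. The
competitor that follows the segment from `γ s` to `γ t` shows that, whenever `γ t` is near `w`, the
energy spent by `γ` between the times `s` and `t` is at most a multiple of `(F (γ t) + ε) ^ 2`. So
if `e` is the energy spent, counted from time `s`, then near `w` the speed of `γ` is at most a
multiple of the derivative of `e` divided by `√|e|`. Up to a factor this is the derivative of
`sign e * √|e|`, which is bounded by the total energy, independently of `ε`.

By Taylor's formula, the square root of a nonnegative function vanishes linearly at a zero where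
the Hessian is positive definite.
-/

/-! ### Calculus on the line -/

lemma integral_le_sub_of_ae_le_deriv {u φ : ℝ → ℝ} {a b : ℝ} (hab : a ≤ b)
    (hu : MonotoneOn u (Icc a b)) (hφ : IntervalIntegrable φ volume a b)
    (hle : ∀ᵐ t, t ∈ Ioo a b → φ t ≤ deriv u t) : ∫ t in a..b, φ t ≤ u b - u a := by
  rw [← uIcc_of_le hab] at hu
  have hua : 0 ≤ u b - u a := sub_nonneg.2 (hu left_mem_uIcc right_mem_uIcc hab)
  have hderiv := hu.intervalIntegral_deriv_mem_uIcc
  rw [uIcc_of_le hua] at hderiv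
  refine le_trans ?_ hderiv.2
  refine intervalIntegral.integral_mono_ae_restrict hab hφ hu.intervalIntegrable_deriv ?_
  rw [← restrict_Ioo_eq_restrict_Icc]
  exact (ae_restrict_iff' measurableSet_Ioo).2 hle

section LocallyLipschitz

variable {E : Type*} [NormedAddCommGroup E] [NormedSpace ℝ E] {γ : ℝ → E}

lemma exists_norm_deriv_le_of_locallyLipschitz (hγ : LocallyLipschitz γ) (a b : ℝ) :
    ∃ K : ℝ, ∀ t ∈ Icc a b, ‖deriv γ t‖ ≤ K := by
  obtain ⟨K, hK⟩ := hγ.locallyLipschitzOn.exists_lipschitzOnWith_of_compact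
    (isCompact_Icc (a := a - 1) (b := b + 1))
  refine ⟨K, fun t ht => norm_deriv_le_of_lipschitzOn ?_ hK⟩
  exact Icc_mem_nhds (by linarith [ht.1]) (by linarith [ht.2])

lemma intervalIntegrable_norm_deriv_of_locallyLipschitz [CompleteSpace E]
    (hγ : LocallyLipschitz γ) (a b : ℝ) :
    IntervalIntegrable (fun t => ‖deriv γ t‖) volume a b := by
  obtain ⟨K, hK⟩ := exists_norm_deriv_le_of_locallyLipschitz hγ (min a b) (max a b)
  refine (intervalIntegrable_const (c := K)).mono_fun
    (stronglyMeasurable_deriv γ).norm.aestronglyMeasurable ?_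
  refine (ae_restrict_iff' measurableSet_uIoc).2 (Eventually.of_forall fun t ht => ?_)
  simp only [norm_norm]
  exact (hK t (uIoc_subset_uIcc ht)).trans (le_abs_self K)

lemma ae_differentiableAt_of_locallyLipschitz [FiniteDimensional ℝ E]
    (hγ : LocallyLipschitz γ) (a b : ℝ) : ∀ᵐ t, t ∈ Ioo a b → DifferentiableAt ℝ γ t := by
  obtain ⟨K, hK⟩ := hγ.locallyLipschitzOn.exists_lipschitzOnWith_of_compact
    (isCompact_Icc (a := a) (b := b))
  filter_upwards [hK.ae_differentiableWithinAt_of_mem_real] with t ht hmem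
  exact (ht (Ioo_subset_Icc_self hmem)).differentiableAt (Icc_mem_nhds hmem.1 hmem.2)

lemma norm_sub_le_integral_norm_deriv_of_locallyLipschitz [FiniteDimensional ℝ E]
    (hγ : LocallyLipschitz γ) {s t : ℝ} (hst : s ≤ t) :
    ‖γ t - γ s‖ ≤ ∫ r in s..t, ‖deriv γ r‖ := by
  obtain ⟨g, hg, hgγ⟩ := exists_dual_vector'' ℝ (γ t - γ s)
  obtain ⟨K, hK⟩ := (g.lipschitz.locallyLipschitz.comp hγ).locallyLipschitzOn
    |>.exists_lipschitzOnWith_of_compact (isCompact_uIcc (a := s) (b := t))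
  have hac := hK.absolutelyContinuousOnInterval
  calc ‖γ t - γ s‖ = (g ∘ γ) t - (g ∘ γ) s := by simpa using hgγ.symm
    _ = ∫ r in s..t, deriv (g ∘ γ) r := hac.integral_deriv_eq_sub.symm
    _ ≤ ∫ r in s..t, ‖deriv γ r‖ := ?_
  refine intervalIntegral.integral_mono_ae_restrict hst hac.intervalIntegrable_deriv
    (intervalIntegrable_norm_deriv_of_locallyLipschitz hγ s t) ?_
  rw [← restrict_Ioo_eq_restrict_Icc]
  refine (ae_restrict_iff' measurableSet_Ioo).2 ?_
  filter_upwards [ae_differentiableAt_of_locallyLipschitz hγ s t] with r hr hmem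
  rw [(g.hasFDerivAt.comp_hasDerivAt r (hr hmem).hasDerivAt).deriv]
  exact (le_abs_self _).trans (g.le_of_opNorm_le_of_le hg le_rfl |>.trans_eq (one_mul _))

end LocallyLipschitz

/-! ### Weighted length -/

section WeightedLength

variable {E : Type*} [NormedAddCommGroup E] [NormedSpace ℝ E] {F : E → ℝ} {γ : ℝ → E}

/-- The length of `γ` on `[a, b]` for the degenerate metric with conformal factor `F`, in an
arbitrary normed space; `degLen` is the case of the Euclidean plane. -/
def weightedLength (F : E → ℝ) (a b : ℝ) (γ : ℝ → E) : ℝ :=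
  ∫ t in a..b, F (γ t) * ‖deriv γ t‖

/-- The length of `γ` on `[a, b]` for the ambient norm. -/
def arcLength (a b : ℝ) (γ : ℝ → E) : ℝ :=
  ∫ t in a..b, ‖deriv γ t‖

lemma weightedLength_one (a b : ℝ) (γ : ℝ → E) :
    weightedLength (fun _ => 1) a b γ = arcLength a b γ := by
  simp only [weightedLength, arcLength, one_mul]

lemma weightedLength_nonneg (hF : ∀ x, 0 ≤ F x) {a b : ℝ} (hab : a ≤ b) (γ : ℝ → E) :
    0 ≤ weightedLength F a b γ :=
  intervalIntegral.integral_nonneg hab fun _ _ => mul_nonneg (hF _) (norm_nonneg _)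

lemma arcLength_nonneg {a b : ℝ} (hab : a ≤ b) (γ : ℝ → E) : 0 ≤ arcLength a b γ :=
  intervalIntegral.integral_nonneg hab fun _ _ => norm_nonneg _

lemma weightedLength_congr {γ' : ℝ → E} {a b : ℝ} (hab : a ≤ b) (h : EqOn γ γ' (Ioo a b)) :
    weightedLength F a b γ = weightedLength F a b γ' := by
  unfold weightedLength
  rw [intervalIntegral.integral_of_le hab, intervalIntegral.integral_of_le hab,
    integral_Ioc_eq_integral_Ioo, integral_Ioc_eq_integral_Ioo]
  refine setIntegral_congr_fun measurableSet_Ioo fun t ht => ?_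
  simp only [(h.eventuallyEq_of_mem (Ioo_mem_nhds ht.1 ht.2)).deriv_eq, h ht]

variable [CompleteSpace E]

lemma intervalIntegrable_weightedLength (hF : Continuous F) (hγ : LocallyLipschitz γ)
    (a b : ℝ) : IntervalIntegrable (fun t => F (γ t) * ‖deriv γ t‖) volume a b :=
  (intervalIntegrable_norm_deriv_of_locallyLipschitz hγ a b).continuousOn_mul
    (hF.comp hγ.continuous).continuousOn

lemma weightedLength_add_adjacent (hF : Continuous F) (hγ : LocallyLipschitz γ) (a b c : ℝ) :
    weightedLength F a b γ + weightedLength F b c γ = weightedLength F a c γ :=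
  intervalIntegral.integral_add_adjacent_intervals (intervalIntegrable_weightedLength hF hγ _ _)
    (intervalIntegrable_weightedLength hF hγ _ _)

lemma monotone_weightedLength (hF : Continuous F) (hF0 : ∀ x, 0 ≤ F x)
    (hγ : LocallyLipschitz γ) (a : ℝ) : Monotone fun t => weightedLength F a t γ := by
  intro s t hst
  have hadd := weightedLength_add_adjacent hF hγ a s t
  have hnonneg := weightedLength_nonneg hF0 hst γ
  simp only
  linarith

lemma continuous_weightedLength (hF : Continuous F) (hγ : LocallyLipschitz γ) (a : ℝ) :
    Continuous fun t => weightedLength F a t γ :=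
  intervalIntegral.continuous_primitive (intervalIntegrable_weightedLength hF hγ) a

lemma ae_hasDerivAt_weightedLength (hF : Continuous F) (hγ : LocallyLipschitz γ) (a b : ℝ) :
    ∀ᵐ t, t ∈ Ioo a b →
      HasDerivAt (fun t => weightedLength F a t γ) (F (γ t) * ‖deriv γ t‖) t := by
  filter_upwards [(intervalIntegrable_weightedLength hF hγ a b).ae_hasDerivAt_integral]
    with t ht hmem
  exact ht (Icc_subset_uIcc (Ioo_subset_Icc_self hmem)) a left_mem_uIcc

lemma weightedLength_add_const (hF : Continuous F) (hγ : LocallyLipschitz γ) (ε a b : ℝ) :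
    weightedLength (fun x => F x + ε) a b γ = weightedLength F a b γ + ε * arcLength a b γ := by
  simp only [weightedLength, arcLength, add_mul]
  rw [intervalIntegral.integral_add (intervalIntegrable_weightedLength hF hγ _ _)
    ((intervalIntegrable_norm_deriv_of_locallyLipschitz hγ _ _).const_mul _),
    intervalIntegral.integral_const_mul]

lemma mul_arcLength_le_weightedLength (hF : Continuous F) (hγ : LocallyLipschitz γ) {a b c : ℝ}
    (hab : a ≤ b) (hc : ∀ t ∈ Icc a b, c ≤ F (γ t)) :
    c * arcLength a b γ ≤ weightedLength F a b γ := by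
  rw [arcLength, ← intervalIntegral.integral_const_mul]
  refine intervalIntegral.integral_mono_on hab
    ((intervalIntegrable_norm_deriv_of_locallyLipschitz hγ _ _).const_mul _)
    (intervalIntegrable_weightedLength hF hγ _ _) fun t ht => ?_
  exact mul_le_mul_of_nonneg_right (hc t ht) (norm_nonneg _)

end WeightedLength

/-! ### Curves, distance and geodesics -/

section Geodesic

variable {E : Type*} [NormedAddCommGroup E] [NormedSpace ℝ E] {F : E → ℝ} {p q : E}

/-- A locally Lipschitz curve on `[a, b]` joining `p` to `q`, the analogue of `IsCurve` in a normed
space. As there, the curve is defined on all of `ℝ`, but only its values on `[a, b]` matter. -/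
structure IsLipschitzCurve (a b : ℝ) (γ : ℝ → E) (p q : E) : Prop where
  le : a ≤ b
  locallyLipschitz : LocallyLipschitz γ
  source : γ a = p
  target : γ b = q

/-- The degenerate distance `d̄_F(p, q)`. -/
def weightedDist (F : E → ℝ) (p q : E) : ℝ :=
  sInf {x | ∃ a b γ, IsLipschitzCurve a b γ p q ∧ weightedLength F a b γ = x}

/-- A curve from `p` to `q` attaining the degenerate distance `d̄_F(p, q)`. -/
structure IsGeodesic (F : E → ℝ) (a b : ℝ) (γ : ℝ → E) (p q : E) : Prop
    extends IsLipschitzCurve a b γ p q where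
  weightedLength_eq : weightedLength F a b γ = weightedDist F p q

lemma hasDerivAt_lineMap_div (p q : E) (s t r : ℝ) :
    HasDerivAt (fun r => AffineMap.lineMap p q ((r - s) / (t - s))) ((t - s)⁻¹ • (q - p)) r := by
  have hinner : HasDerivAt (fun r : ℝ => (r - s) / (t - s)) (t - s)⁻¹ r := by
    simpa using ((hasDerivAt_id r).sub_const s).div_const (t - s)
  exact AffineMap.hasDerivAt_lineMap.scomp r hinner

lemma isLipschitzCurve_lineMap_div (p q : E) {s t : ℝ} (hst : s < t) :
    IsLipschitzCurve s t (fun r => AffineMap.lineMap p q ((r - s) / (t - s))) p q where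
  le := hst.le
  locallyLipschitz := by
    have hsmooth : ContDiff ℝ 1 fun r : ℝ => AffineMap.lineMap p q ((r - s) / (t - s)) :=
      (AffineMap.contDiff_lineMap p q).comp (by fun_prop)
    exact hsmooth.locallyLipschitz
  source := by simp
  target := by simp [div_self (sub_pos.2 hst).ne']

lemma weightedLength_lineMap_div_le [CompleteSpace E] (hF : Continuous F) {s t M : ℝ}
    (hst : s < t) (hM : ∀ x ∈ segment ℝ p q, F x ≤ M) :
    weightedLength F s t (fun r => AffineMap.lineMap p q ((r - s) / (t - s))) ≤ M * ‖q - p‖ := by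
  have hts : 0 < t - s := sub_pos.2 hst
  have hspeed : ∀ r, ‖deriv (fun r => AffineMap.lineMap p q ((r - s) / (t - s))) r‖ =
      (t - s)⁻¹ * ‖q - p‖ := fun r => by
    rw [(hasDerivAt_lineMap_div p q s t r).deriv, norm_smul, Real.norm_of_nonneg (by positivity)]
  calc weightedLength F s t (fun r => AffineMap.lineMap p q ((r - s) / (t - s)))
      ≤ ∫ _ in s..t, M * ((t - s)⁻¹ * ‖q - p‖) := by
        refine intervalIntegral.integral_mono_on hst.le (intervalIntegrable_weightedLength hF
          (isLipschitzCurve_lineMap_div p q hst).locallyLipschitz s t) (by simp) fun r hr => ?_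
        rw [hspeed]
        refine mul_le_mul_of_nonneg_right (hM _ ?_) (by positivity)
        rw [segment_eq_image_lineMap]
        exact mem_image_of_mem _ ⟨div_nonneg (sub_nonneg.2 hr.1) hts.le,
          (div_le_one hts).2 (sub_le_sub_right hr.2 s)⟩
    _ = M * ‖q - p‖ := by
        rw [intervalIntegral.integral_const, smul_eq_mul]
        field_simp

lemma weightedDist_le (hF0 : ∀ x, 0 ≤ F x) {a b : ℝ} {γ : ℝ → E}
    (hγ : IsLipschitzCurve a b γ p q) : weightedDist F p q ≤ weightedLength F a b γ := by
  refine csInf_le ⟨0, ?_⟩ ⟨a, b, γ, hγ, rfl⟩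
  rintro _ ⟨a', b', γ', hγ', rfl⟩
  exact weightedLength_nonneg hF0 hγ'.le γ'

lemma weightedDist_add_const_le [CompleteSpace E] (hF : Continuous F) (hF0 : ∀ x, 0 ≤ F x)
    {ε a b : ℝ} (hε : 0 ≤ ε) {γ : ℝ → E} (hγ : IsLipschitzCurve a b γ p q) :
    weightedDist (fun x => F x + ε) p q ≤ weightedLength F a b γ + ε * arcLength a b γ := by
  rw [← weightedLength_add_const hF hγ.locallyLipschitz]
  exact weightedDist_le (fun x => add_nonneg (hF0 x) hε) hγ

lemma exists_weightedLength_lt_of_weightedDist_lt {m : ℝ} (hm : weightedDist F p q < m) :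
    ∃ a b γ, IsLipschitzCurve a b γ p q ∧ weightedLength F a b γ < m := by
  have hne : {x | ∃ a b γ, IsLipschitzCurve a b γ p q ∧ weightedLength F a b γ = x}.Nonempty :=
    ⟨_, 0, 1, _, isLipschitzCurve_lineMap_div p q one_pos, rfl⟩
  obtain ⟨_, ⟨a, b, γ, hγ, rfl⟩, hlt⟩ := exists_lt_of_csInf_lt hne hm
  exact ⟨a, b, γ, hγ, hlt⟩

lemma IsLipschitzCurve.exists_replace [CompleteSpace E] (hF : Continuous F) {a b s t : ℝ}
    {γ σ : ℝ → E} (hγ : IsLipschitzCurve a b γ p q) (has : a ≤ s) (htb : t ≤ b)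
    (hσ : IsLipschitzCurve s t σ (γ s) (γ t)) :
    ∃ γ', IsLipschitzCurve a b γ' p q ∧ weightedLength F a b γ' =
      weightedLength F a s γ + weightedLength F s t σ + weightedLength F t b γ := by
  have hst := hσ.le
  set γ' : ℝ → E := fun r =>
    γ (min r s) + (σ (max s (min r t)) - γ s) + (γ (max r t) - γ t) with hγ'
  have eq_left : ∀ r ≤ s, γ' r = γ r := fun r hr => by
    simp [hγ', hr, hr.trans hst, hσ.source]
  have eq_right : ∀ r, t ≤ r → γ' r = γ r := fun r hr => by
    simp [hγ', hr, hst, hst.trans hr, hσ.target]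
  have eq_mid : ∀ r ∈ Ioo s t, γ' r = σ r := fun r hr => by
    simp [hγ', hr.1.le, hr.2.le]
  have hlip : LocallyLipschitz γ' := by
    have hid : LocallyLipschitz (id : ℝ → ℝ) := LocallyLipschitz.id
    exact ((hγ.locallyLipschitz.comp (hid.min_const s)).add
      ((hσ.locallyLipschitz.comp ((hid.min_const t).const_max s)).sub (.const _))).add
      ((hγ.locallyLipschitz.comp (hid.max_const t)).sub (.const _))
  refine ⟨γ', ⟨hγ.le, hlip, (eq_left a has).trans hγ.source, (eq_right b htb).trans hγ.target⟩, ?_⟩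
  rw [← weightedLength_add_adjacent hF hlip a t b, ← weightedLength_add_adjacent hF hlip a s t,
    weightedLength_congr has fun r hr => eq_left r hr.2.le, weightedLength_congr hst eq_mid,
    weightedLength_congr htb fun r hr => eq_right r hr.1.le]

lemma IsGeodesic.weightedLength_le_of_subarc [CompleteSpace E] (hF : Continuous F)
    (hF0 : ∀ x, 0 ≤ F x) {a b s t : ℝ} {γ σ : ℝ → E} (hγ : IsGeodesic F a b γ p q) (has : a ≤ s)
    (htb : t ≤ b) (hσ : IsLipschitzCurve s t σ (γ s) (γ t)) :
    weightedLength F s t γ ≤ weightedLength F s t σ := by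
  obtain ⟨γ', hγ', hlen⟩ := hγ.exists_replace hF has htb hσ
  have hmin := weightedDist_le hF0 hγ'
  rw [← hγ.weightedLength_eq] at hmin
  have hsplit := weightedLength_add_adjacent hF hγ.locallyLipschitz a s t
  have hsplit' := weightedLength_add_adjacent hF hγ.locallyLipschitz a t b
  linarith

lemma IsGeodesic.abs_weightedLength_sub_le [CompleteSpace E] (hF : Continuous F)
    (hF0 : ∀ x, 0 ≤ F x) {a b s t M : ℝ} {γ : ℝ → E} (hγ : IsGeodesic F a b γ p q)
    (hs : s ∈ Icc a b) (ht : t ∈ Icc a b) (hM : ∀ x ∈ segment ℝ (γ s) (γ t), F x ≤ M) :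
    |weightedLength F a t γ - weightedLength F a s γ| ≤ M * ‖γ t - γ s‖ := by
  wlog hst : s ≤ t generalizing s t
  · rw [abs_sub_comm, norm_sub_rev]
    exact this ht hs (segment_symm ℝ (γ s) (γ t) ▸ hM) (le_of_not_ge hst)
  obtain rfl | hlt := hst.eq_or_lt
  · simp
  have hmono : weightedLength F a s γ ≤ weightedLength F a t γ :=
    monotone_weightedLength hF hF0 hγ.locallyLipschitz a hst
  rw [abs_of_nonneg (sub_nonneg.2 hmono),
    ← weightedLength_add_adjacent hF hγ.locallyLipschitz a s t, add_sub_cancel_left]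
  exact (hγ.weightedLength_le_of_subarc hF hF0 hs.1 ht.2
    (isLipschitzCurve_lineMap_div _ _ hlt)).trans (weightedLength_lineMap_div_le hF hlt hM)

end Geodesic

/-! ### Limits of curves of bounded length -/

lemma exists_tendsto_ultrafilter_of_isCompact {ι X : Type*} [TopologicalSpace X]
    (𝒰 : Ultrafilter ι) {K : Set X} (hK : IsCompact K) {u : ι → X} (hu : ∀ i, u i ∈ K) :
    ∃ x, Tendsto u 𝒰 (𝓝 x) := by
  obtain ⟨x, -, hx⟩ := hK.ultrafilter_le_nhds' (𝒰.map u) (univ_mem' (f := (𝒰 : Filter ι)) hu)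
  exact ⟨x, hx⟩

section EnergyControl

variable {E : Type*} [NormedAddCommGroup E] {F : E → ℝ} {σ : ℝ → E} {e : ℝ → ℝ}

/-- The increments of `e` dominate the `F`-energy of the `1`-Lipschitz curve `σ`. The domination is
expressed through lower bounds of `F` on balls rather than through the derivative of `σ`, so that it
passes to pointwise limits of `σ` and `e`. -/
structure EnergyControlled (F : E → ℝ) (σ : ℝ → E) (e : ℝ → ℝ) : Prop where
  lipschitzWith : LipschitzWith 1 σ
  monotone : Monotone e
  mul_norm_sub_le : ∀ ⦃s t : ℝ⦄, s ≤ t → ∀ ⦃c r : ℝ⦄, t - s < r →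
    (∀ x ∈ Metric.ball (σ s) r, c ≤ F x) → c * ‖σ t - σ s‖ ≤ e t - e s

lemma EnergyControlled.of_tendsto {ι : Type*} {l : Filter ι} [l.NeBot] {σs : ι → ℝ → E}
    {es : ι → ℝ → ℝ} (h : ∀ i, EnergyControlled F (σs i) (es i))
    (hσ : ∀ s, Tendsto (fun i => σs i s) l (𝓝 (σ s)))
    (he : ∀ s, Tendsto (fun i => es i s) l (𝓝 (e s))) : EnergyControlled F σ e where
  lipschitzWith := LipschitzWith.of_dist_le_mul fun s t =>
    le_of_tendsto ((hσ s).dist (hσ t)) (.of_forall fun i => (h i).lipschitzWith.dist_le_mul s t)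
  monotone s t hst :=
    le_of_tendsto_of_tendsto (he s) (he t) (.of_forall fun i => (h i).monotone hst)
  mul_norm_sub_le s t hst c r hr hc := by
    obtain ⟨r', hr', hr'r⟩ := exists_between hr
    have hball : ∀ᶠ i in l, Metric.ball (σs i s) r' ⊆ Metric.ball (σ s) r := by
      filter_upwards [(hσ s).eventually (Metric.ball_mem_nhds _ (sub_pos.2 hr'r))] with i hi
      exact Metric.ball_subset_ball' (by linarith [Metric.mem_ball.1 hi])
    refine le_of_tendsto_of_tendsto (((hσ t).sub (hσ s)).norm.const_mul c)
      ((he t).sub (he s)) ?_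
    filter_upwards [hball] with i hi
    exact (h i).mul_norm_sub_le hst hr' fun x hx => hc x (hi hx)

variable [NormedSpace ℝ E]

lemma EnergyControlled.mul_norm_le_of_hasDerivAt (h : EnergyControlled F σ e) (hF : Continuous F)
    {s e' : ℝ} {σ' : E} (hσ : HasDerivAt σ σ' s) (he : HasDerivAt e e' s) :
    F (σ s) * ‖σ'‖ ≤ e' := by
  suffices hlt : ∀ c < F (σ s), c * ‖σ'‖ ≤ e' from
    le_of_tendsto ((continuous_mul_const ‖σ'‖).tendsto (F (σ s)) |>.mono_left nhdsWithin_le_nhds)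
      (eventually_mem_nhdsWithin (s := Iio (F (σ s))) |>.mono hlt)
  intro c hc
  obtain ⟨r, hr, hball⟩ := Metric.eventually_nhds_iff_ball.1
    (hF.continuousAt.eventually_const_le hc)
  have hσ_slope := (hasDerivWithinAt_iff_tendsto_slope' self_notMem_Ioi).1 hσ.hasDerivWithinAt
  have he_slope := (hasDerivWithinAt_iff_tendsto_slope' self_notMem_Ioi).1 he.hasDerivWithinAt
  refine le_of_tendsto_of_tendsto (hσ_slope.norm.const_mul c) he_slope ?_
  filter_upwards [Ioo_mem_nhdsGT (show s < s + r by linarith)] with t ht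
  have hts : 0 < (t - s)⁻¹ := inv_pos.2 (sub_pos.2 ht.1)
  have hctrl := h.mul_norm_sub_le ht.1.le (by linarith [ht.2]) hball
  calc c * ‖slope σ s t‖ = (t - s)⁻¹ * (c * ‖σ t - σ s‖) := by
        rw [slope_def_module, norm_smul, Real.norm_of_nonneg hts.le, mul_left_comm]
    _ ≤ (t - s)⁻¹ * (e t - e s) := mul_le_mul_of_nonneg_left hctrl hts.le
    _ = slope e s t := by rw [slope_def_module, smul_eq_mul]

lemma EnergyControlled.weightedLength_le [FiniteDimensional ℝ E] (h : EnergyControlled F σ e)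
    (hF : Continuous F) {a b : ℝ} (hab : a ≤ b) : weightedLength F a b σ ≤ e b - e a := by
  have hσ := h.lipschitzWith.locallyLipschitz
  refine integral_le_sub_of_ae_le_deriv hab (h.monotone.monotoneOn _)
    (intervalIntegrable_weightedLength hF hσ a b) ?_
  filter_upwards [ae_differentiableAt_of_locallyLipschitz hσ a b, h.monotone.ae_differentiableAt]
    with t hσt het hmem
  exact h.mul_norm_le_of_hasDerivAt hF (hσt hmem).hasDerivAt het.hasDerivAt

lemma exists_monotone_comp_eq_projIcc {ℓ : ℝ → ℝ} {a b : ℝ} (hab : a ≤ b) (hℓ : Continuous ℓ)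
    (hmono : Monotone ℓ) :
    ∃ τ : ℝ → ℝ, Monotone τ ∧ (∀ s, τ s ∈ Icc a b) ∧
      ∀ s, ℓ (τ s) = projIcc (ℓ a) (ℓ b) (hmono hab) s := by
  choose T hT hℓT using fun y : Icc (ℓ a) (ℓ b) => intermediate_value_Icc hab hℓ.continuousOn y.2
  have hTmono : Monotone T := by
    intro y z hyz
    obtain rfl | hlt := hyz.eq_or_lt
    · rfl
    · refine (hmono.reflect_lt ?_).le
      rw [hℓT, hℓT]
      exact hlt
  exact ⟨fun s => T (projIcc _ _ _ s), hTmono.comp (monotone_projIcc _), fun s => hT _,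
    fun s => hℓT _⟩

lemma arcLength_add_adjacent [CompleteSpace E] {γ : ℝ → E} (hγ : LocallyLipschitz γ)
    (a b c : ℝ) : arcLength a b γ + arcLength b c γ = arcLength a c γ := by
  simpa only [weightedLength_one] using
    weightedLength_add_adjacent (F := fun _ => 1) continuous_const hγ a b c

lemma norm_sub_le_abs_arcLength_sub [FiniteDimensional ℝ E] {γ : ℝ → E}
    (hγ : LocallyLipschitz γ) (a s t : ℝ) :
    ‖γ t - γ s‖ ≤ |arcLength a t γ - arcLength a s γ| := by
  wlog hst : s ≤ t generalizing s t
  · rw [abs_sub_comm, norm_sub_rev]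
    exact this t s (le_of_not_ge hst)
  rw [← arcLength_add_adjacent hγ a s t, add_sub_cancel_left]
  exact (norm_sub_le_integral_norm_deriv_of_locallyLipschitz hγ hst).trans (le_abs_self _)

lemma energyControlled_comp [FiniteDimensional ℝ E] (hF : Continuous F) (hF0 : ∀ x, 0 ≤ F x)
    {γ : ℝ → E} (hγ : LocallyLipschitz γ) {τ : ℝ → ℝ} (hτ : Monotone τ) {a : ℝ}
    (hlip : ∀ s t, |arcLength a (τ t) γ - arcLength a (τ s) γ| ≤ |t - s|) :
    EnergyControlled F (γ ∘ τ) fun s => weightedLength F a (τ s) γ where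
  lipschitzWith := LipschitzWith.of_dist_le_mul fun s t => by
    rw [dist_comm, dist_comm s t, dist_eq_norm, NNReal.coe_one, one_mul, Real.dist_eq]
    exact (norm_sub_le_abs_arcLength_sub hγ a _ _).trans (hlip s t)
  monotone := (monotone_weightedLength hF hF0 hγ a).comp hτ
  mul_norm_sub_le s t hst c r hr hc := by
    have hτst := hτ hst
    have hshort : arcLength (τ s) (τ t) γ ≤ t - s := by
      have := hlip s t
      rw [← arcLength_add_adjacent hγ a (τ s) (τ t), add_sub_cancel_left,
        abs_of_nonneg (sub_nonneg.2 hst)] at this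
      exact (le_abs_self _).trans this
    have hmem : ∀ u ∈ Icc (τ s) (τ t), γ u ∈ Metric.ball (γ (τ s)) r := fun u hu => by
      have hadd := arcLength_add_adjacent hγ (τ s) u (τ t)
      have hnonneg := arcLength_nonneg hu.2 γ
      have hnorm : ‖γ u - γ (τ s)‖ ≤ arcLength (τ s) u γ :=
        norm_sub_le_integral_norm_deriv_of_locallyLipschitz hγ hu.1
      rw [Metric.mem_ball, dist_eq_norm]
      linarith
    have henergy := weightedLength_add_adjacent hF hγ a (τ s) (τ t)
    rw [← henergy, add_sub_cancel_left]
    obtain hc0 | hc0 := le_total c 0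
    · exact (mul_nonpos_of_nonpos_of_nonneg hc0 (norm_nonneg _)).trans
        (weightedLength_nonneg hF0 hτst γ)
    · exact (mul_le_mul_of_nonneg_left
        (norm_sub_le_integral_norm_deriv_of_locallyLipschitz hγ hτst) hc0).trans
        (mul_arcLength_le_weightedLength hF hγ hτst fun u hu => hc _ (hmem u hu))

variable [FiniteDimensional ℝ E] {p q : E}

lemma IsLipschitzCurve.exists_energyControlled (hF : Continuous F) (hF0 : ∀ x, 0 ≤ F x)
    {a b L : ℝ} {γ : ℝ → E} (hγ : IsLipschitzCurve a b γ p q) (hL : arcLength a b γ ≤ L) :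
    ∃ σ e, EnergyControlled F σ e ∧ σ 0 = p ∧ σ L = q ∧
      ∀ s, e s ∈ Icc 0 (weightedLength F a b γ) := by
  have hlip := hγ.locallyLipschitz
  have hcont : Continuous fun t => arcLength a t γ := by
    simpa only [weightedLength_one] using
      continuous_weightedLength (F := fun _ => 1) continuous_const hlip a
  have hmono : Monotone fun t => arcLength a t γ := by
    simpa only [weightedLength_one] using
      monotone_weightedLength (F := fun _ => 1) continuous_const (fun _ => zero_le_one) hlip a
  have hzero : arcLength a a γ = 0 := intervalIntegral.integral_same
  obtain ⟨τ, hτ, hτmem, hτproj⟩ := exists_monotone_comp_eq_projIcc hγ.le hcont hmono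
  have eq_of_arcLength_eq : ∀ {s t}, arcLength a t γ = arcLength a s γ → γ t = γ s := fun {s t} h =>
    sub_eq_zero.1 <| norm_le_zero_iff.1 <| by
      simpa only [h, sub_self, abs_zero] using norm_sub_le_abs_arcLength_sub hlip a s t
  refine ⟨γ ∘ τ, fun s => weightedLength F a (τ s) γ, energyControlled_comp hF hF0 hlip hτ ?_,
    ?_, ?_, fun s => ⟨weightedLength_nonneg hF0 (hτmem s).1 γ,
      monotone_weightedLength hF hF0 hlip a (hτmem s).2⟩⟩
  · intro s t
    simp only [hτproj]
    exact abs_projIcc_sub_projIcc _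
  · rw [← hγ.source]
    refine eq_of_arcLength_eq ((hτproj 0).trans ?_)
    rw [projIcc_of_le_left _ hzero.ge]
  · rw [← hγ.target]
    refine eq_of_arcLength_eq ((hτproj L).trans ?_)
    rw [projIcc_of_right_le _ hL]

lemma EnergyControlled.exists_tendsto {ι : Type*} (𝒰 : Ultrafilter ι) {σs : ι → ℝ → E}
    {es : ι → ℝ → ℝ} {K : ℝ} (h : ∀ i, EnergyControlled F (σs i) (es i)) (hσs : ∀ i, σs i 0 = p)
    (hes : ∀ i s, es i s ∈ Icc 0 K) :
    ∃ σ e, EnergyControlled F σ e ∧ (∀ s, Tendsto (fun i => σs i s) 𝒰 (𝓝 (σ s))) ∧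
      ∀ s, Tendsto (fun i => es i s) 𝒰 (𝓝 (e s)) := by
  have hmem : ∀ s i, σs i s ∈ Metric.closedBall p |s| := fun s i => by
    simpa [hσs i] using (h i).lipschitzWith.dist_le_mul s 0
  choose σ hσ using fun s =>
    exists_tendsto_ultrafilter_of_isCompact 𝒰 (isCompact_closedBall p |s|) (hmem s)
  choose e he using fun s =>
    exists_tendsto_ultrafilter_of_isCompact 𝒰 isCompact_Icc fun i => hes i s
  exact ⟨σ, e, .of_tendsto h hσ he, hσ, he⟩

lemma exists_isLipschitzCurve_weightedLength_le (hF : Continuous F) (hF0 : ∀ x, 0 ≤ F x)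
    {L m : ℝ} (h : ∀ m' > m, ∃ a b γ, IsLipschitzCurve a b γ p q ∧ arcLength a b γ ≤ L ∧
      weightedLength F a b γ ≤ m') :
    ∃ σ, IsLipschitzCurve 0 L σ p q ∧ weightedLength F 0 L σ ≤ m := by
  obtain ⟨ms, hms_anti, hms_gt, hms_lim⟩ := exists_seq_strictAnti_tendsto m
  choose a b γ hγ hlen henergy using fun n => h (ms n) (hms_gt n)
  have hL : 0 ≤ L := (arcLength_nonneg (hγ 0).le (γ 0)).trans (hlen 0)
  choose σs es hctrl hσ0 hσL hes using
    fun n => (hγ n).exists_energyControlled hF hF0 (hlen n)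
  have hes_le : ∀ n s, es n s ≤ ms n := fun n s => (hes n s).2.trans (henergy n)
  obtain ⟨σ, e, hσe, hσ, he⟩ := EnergyControlled.exists_tendsto (hyperfilter ℕ) hctrl hσ0
    fun n s => ⟨(hes n s).1, (hes_le n s).trans (hms_anti.antitone n.zero_le)⟩
  refine ⟨σ, ⟨hL, hσe.lipschitzWith.locallyLipschitz, ?_, ?_⟩, ?_⟩
  · exact tendsto_nhds_unique (hσ 0) (by simpa only [hσ0] using tendsto_const_nhds)
  · exact tendsto_nhds_unique (hσ L) (by simpa only [hσL] using tendsto_const_nhds)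
  · have he0 : 0 ≤ e 0 := ge_of_tendsto' (he 0) fun n => (hes n 0).1
    have heL : e L ≤ m := le_of_tendsto_of_tendsto' (he L)
      (hms_lim.mono_left Nat.hyperfilter_le_atTop) fun n => hes_le n L
    linarith [hσe.weightedLength_le hF hL]

lemma exists_isGeodesic_of_le {ε : ℝ} (hF : Continuous F) (hε : 0 < ε) (hεF : ∀ x, ε ≤ F x)
    (p q : E) : ∃ a b γ, IsGeodesic F a b γ p q := by
  have hF0 : ∀ x, 0 ≤ F x := fun x => hε.le.trans (hεF x)
  obtain ⟨σ, hσ, hle⟩ := exists_isLipschitzCurve_weightedLength_le (p := p) (q := q)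
    (L := (weightedDist F p q + 1) / ε) (m := weightedDist F p q) hF hF0 fun m' hm' => by
      obtain ⟨a, b, γ, hγ, hlt⟩ := exists_weightedLength_lt_of_weightedDist_lt
        (lt_min hm' (lt_add_one (weightedDist F p q)))
      refine ⟨a, b, γ, hγ, ?_, (lt_min_iff.1 hlt).1.le⟩
      rw [le_div_iff₀' hε]
      exact (mul_arcLength_le_weightedLength hF hγ.locallyLipschitz hγ.le fun t _ =>
        hεF (γ t)).trans (lt_min_iff.1 hlt).2.le
  exact ⟨0, _, σ, hσ, hle.antisymm (weightedDist_le hF0 hσ)⟩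

end EnergyControl

/-! ### A smooth square root -/

/-- A smooth odd function of `x` comparable to `sign x * √|x|` away from the scale `|x| ≤ ε ^ 2`. -/
def smoothSqrt (ε x : ℝ) : ℝ :=
  x / √(√(x ^ 2 + ε ^ 4))

section SmoothSqrt

variable {ε : ℝ}

lemma hasDerivAt_smoothSqrt (hε : 0 < ε) (x : ℝ) :
    HasDerivAt (smoothSqrt ε)
      ((1 - x ^ 2 / (2 * (x ^ 2 + ε ^ 4))) / √(√(x ^ 2 + ε ^ 4))) x := by
  have hpos : 0 < x ^ 2 + ε ^ 4 := by positivity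
  have hinner : HasDerivAt (fun x => x ^ 2 + ε ^ 4) (2 * x) x := by
    simpa using (hasDerivAt_pow 2 x).add_const (ε ^ 4)
  have hroot := (hinner.sqrt hpos.ne').sqrt (Real.sqrt_pos.2 hpos).ne'
  refine ((hasDerivAt_id x).div hroot (by positivity)).congr_deriv ?_
  obtain ⟨z, hz, hzx⟩ : ∃ z > 0, √(x ^ 2 + ε ^ 4) = z ^ 2 :=
    ⟨√(√(x ^ 2 + ε ^ 4)), by positivity, (Real.sq_sqrt (Real.sqrt_nonneg _)).symm⟩
  have hz4 : x ^ 2 + ε ^ 4 = (z ^ 2) ^ 2 := by rw [← hzx, Real.sq_sqrt hpos.le]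
  rw [hzx, Real.sqrt_sq hz.le, hz4, id_eq]
  field_simp

lemma inv_le_deriv_smoothSqrt (hε : 0 < ε) (x : ℝ) :
    (2 * √(√(x ^ 2 + ε ^ 4)))⁻¹ ≤ deriv (smoothSqrt ε) x := by
  have hhalf : x ^ 2 / (2 * (x ^ 2 + ε ^ 4)) ≤ 1 / 2 := by
    rw [div_le_div_iff₀ (by positivity) two_pos]
    nlinarith [pow_pos hε 4]
  rw [(hasDerivAt_smoothSqrt hε x).deriv, mul_inv, ← div_eq_mul_inv]
  gcongr
  linarith

lemma deriv_smoothSqrt_nonneg (hε : 0 < ε) (x : ℝ) : 0 ≤ deriv (smoothSqrt ε) x :=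
  (by positivity : (0 : ℝ) ≤ (2 * √(√(x ^ 2 + ε ^ 4)))⁻¹).trans (inv_le_deriv_smoothSqrt hε x)

lemma abs_smoothSqrt_le (ε x : ℝ) : |smoothSqrt ε x| ≤ √|x| := by
  have habs : √|x| ≤ √(√(x ^ 2 + ε ^ 4)) := by
    refine Real.sqrt_le_sqrt (Real.le_sqrt_of_sq_le ?_)
    rw [sq_abs]
    exact le_add_of_nonneg_right (by positivity)
  rw [smoothSqrt, abs_div, abs_of_nonneg (Real.sqrt_nonneg _)]
  refine div_le_of_le_mul₀ (Real.sqrt_nonneg _) (Real.sqrt_nonneg _) ?_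
  calc |x| = √|x| * √|x| := (Real.mul_self_sqrt (abs_nonneg x)).symm
    _ ≤ √|x| * √(√(x ^ 2 + ε ^ 4)) := mul_le_mul_of_nonneg_left habs (Real.sqrt_nonneg _)

lemma one_le_mul_deriv_smoothSqrt {x g B : ℝ} (hε : 0 < ε) (hεg : ε ≤ g) (hB : 0 ≤ B)
    (hx : |x| ≤ B * g ^ 2) : 1 ≤ 2 * √(B + 1) * deriv (smoothSqrt ε) x * g := by
  have hg : 0 < g := hε.trans_le hεg
  have hroot : √(√(x ^ 2 + ε ^ 4)) ≤ √(B + 1) * g := by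
    have hsq : x ^ 2 + ε ^ 4 ≤ ((B + 1) * g ^ 2) ^ 2 := calc
      x ^ 2 + ε ^ 4 ≤ (B * g ^ 2) ^ 2 + g ^ 4 := by
        refine add_le_add ?_ (by gcongr)
        rw [← sq_abs]
        gcongr
      _ ≤ ((B + 1) * g ^ 2) ^ 2 := by nlinarith [mul_nonneg hB (pow_pos hg 4).le]
    calc √(√(x ^ 2 + ε ^ 4)) ≤ √((B + 1) * g ^ 2) :=
          Real.sqrt_le_sqrt ((Real.sqrt_le_left (by positivity)).2 hsq)
      _ = √(B + 1) * g := by rw [Real.sqrt_mul (by positivity), Real.sqrt_sq hg.le]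
  calc 1 ≤ 2 * √(B + 1) * (2 * √(√(x ^ 2 + ε ^ 4)))⁻¹ * g := by
        rw [mul_right_comm, ← div_eq_mul_inv, one_le_div (by positivity)]
        linarith
    _ ≤ 2 * √(B + 1) * deriv (smoothSqrt ε) x * g := by
        gcongr
        exact inv_le_deriv_smoothSqrt hε x

end SmoothSqrt

/-- An upper bound for the length, as a function of the energy `x` spent so far, of a geodesic
passing closest to the `i`-th well when it has spent the energy `v i`. -/
def lengthMajorant {ι : Type*} (s : Finset ι) (v : ι → ℝ) (c κ ε x : ℝ) : ℝ :=
  c⁻¹ * x + κ * ∑ i ∈ s, smoothSqrt ε (x - v i)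

section LengthMajorant

variable {ι : Type*} {s : Finset ι} {v : ι → ℝ} {c κ ε : ℝ}

lemma hasDerivAt_lengthMajorant (s : Finset ι) (v : ι → ℝ) (c κ : ℝ) (hε : 0 < ε) (x : ℝ) :
    HasDerivAt (lengthMajorant s v c κ ε)
      (c⁻¹ + κ * ∑ i ∈ s, deriv (smoothSqrt ε) (x - v i)) x := by
  have hsum : HasDerivAt (fun x => ∑ i ∈ s, smoothSqrt ε (x - v i))
      (∑ i ∈ s, deriv (smoothSqrt ε) (x - v i)) x :=
    HasDerivAt.fun_sum fun i _ =>
      (hasDerivAt_smoothSqrt hε _).differentiableAt.hasDerivAt.comp_sub_const x (v i)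
  exact (((hasDerivAt_id x).const_mul c⁻¹).add (hsum.const_mul κ)).congr_deriv (by rw [mul_one])

lemma monotone_lengthMajorant (hc : 0 ≤ c) (hκ : 0 ≤ κ) (hε : 0 < ε) :
    Monotone (lengthMajorant s v c κ ε) := by
  refine monotone_of_deriv_nonneg
    (fun x => (hasDerivAt_lengthMajorant s v c κ hε x).differentiableAt) fun x => ?_
  rw [(hasDerivAt_lengthMajorant s v c κ hε x).deriv]
  have := Finset.sum_nonneg fun i (_ : i ∈ s) => deriv_smoothSqrt_nonneg hε (x - v i)
  positivity

lemma one_le_deriv_lengthMajorant_mul {g B x : ℝ} (hc : 0 < c) (hε : 0 < ε) (hεg : ε ≤ g)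
    (hB : 0 ≤ B) (hx : c ≤ g ∨ ∃ i ∈ s, |x - v i| ≤ B * g ^ 2) :
    1 ≤ deriv (lengthMajorant s v c (2 * √(B + 1)) ε) x * g := by
  have hg : 0 < g := hε.trans_le hεg
  have hnonneg : ∀ i ∈ s, 0 ≤ deriv (smoothSqrt ε) (x - v i) := fun i _ =>
    deriv_smoothSqrt_nonneg hε _
  have hsum := Finset.sum_nonneg hnonneg
  rw [(hasDerivAt_lengthMajorant s v c _ hε x).deriv, add_mul]
  obtain hcg | ⟨i, hi, hxi⟩ := hx
  · have hfar : 1 ≤ c⁻¹ * g := by rwa [inv_mul_eq_div, one_le_div hc]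
    exact hfar.trans (le_add_of_nonneg_right (by positivity))
  · refine (one_le_mul_deriv_smoothSqrt hε hεg hB hxi).trans ?_
    refine le_trans ?_ (le_add_of_nonneg_left (by positivity))
    gcongr
    exact Finset.single_le_sum hnonneg hi

lemma lengthMajorant_sub_le {K : ℝ} (hκ : 0 ≤ κ) (hv : ∀ i ∈ s, v i ∈ Icc 0 K) :
    lengthMajorant s v c κ ε K - lengthMajorant s v c κ ε 0 ≤
      c⁻¹ * K + κ * (s.card * (2 * √K)) := by
  have hterm : ∀ i ∈ s, smoothSqrt ε (K - v i) - smoothSqrt ε (0 - v i) ≤ 2 * √K := by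
    intro i hi
    have hsqrt : ∀ x, |x| ≤ K → |smoothSqrt ε x| ≤ √K := fun x hx =>
      (abs_smoothSqrt_le ε x).trans (Real.sqrt_le_sqrt hx)
    have hK := abs_le.1 (hsqrt (K - v i) (abs_le.2 ⟨by linarith [hv i hi |>.1, hv i hi |>.2],
      by linarith [hv i hi |>.1]⟩))
    have h0 := abs_le.1 (hsqrt (0 - v i) (abs_le.2 ⟨by linarith [hv i hi |>.2],
      by linarith [hv i hi |>.1, hv i hi |>.2]⟩))
    linarith [hK.2, h0.1]
  have hsum := Finset.sum_le_card_nsmul s _ _ hterm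
  rw [Finset.sum_sub_distrib, nsmul_eq_mul] at hsum
  calc lengthMajorant s v c κ ε K - lengthMajorant s v c κ ε 0
      = c⁻¹ * K + κ * (∑ i ∈ s, smoothSqrt ε (K - v i) - ∑ i ∈ s, smoothSqrt ε (0 - v i)) := by
        simp only [lengthMajorant]
        ring
    _ ≤ c⁻¹ * K + κ * (s.card * (2 * √K)) := by gcongr

end LengthMajorant

/-! ### Geodesics near the wells -/

section Wells

variable {E : Type*} [NormedAddCommGroup E] {F : E → ℝ} {Z : Set E} {c C : ℝ}

/-- Either `F x` is at least `c`, or, measured in units of the distance from `x` to some well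
`w ∈ Z`, `F x` is at least `c` and `F` is at most `C` on the ball around `w` having `x` on its
boundary. -/
def WellDichotomy (F : E → ℝ) (Z : Set E) (c C : ℝ) (x : E) : Prop :=
  c ≤ F x ∨ ∃ w ∈ Z, c * ‖x - w‖ ≤ F x ∧
    ∀ y ∈ Metric.closedBall w ‖x - w‖, F y ≤ C * ‖x - w‖

lemma WellDichotomy.mono {c' C' : ℝ} {x : E} (h : WellDichotomy F Z c C x) (hc : c' ≤ c)
    (hC : C ≤ C') : WellDichotomy F Z c' C' x := by
  refine h.imp hc.trans ?_
  rintro ⟨w, hw, hlower, hupper⟩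
  exact ⟨w, hw, (mul_le_mul_of_nonneg_right hc (norm_nonneg _)).trans hlower, fun y hy =>
    (hupper y hy).trans (mul_le_mul_of_nonneg_right hC (norm_nonneg _))⟩

lemma exists_mem_Icc_forall_norm_sub_le {a b : ℝ} (hab : a ≤ b) {γ : ℝ → E} (hγ : Continuous γ)
    (w : E) : ∃ s ∈ Icc a b, ∀ t ∈ Icc a b, ‖γ s - w‖ ≤ ‖γ t - w‖ :=
  isCompact_Icc.exists_isMinOn (f := fun t => ‖γ t - w‖) (nonempty_Icc.2 hab) (by fun_prop)

variable [NormedSpace ℝ E]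

lemma arcLength_le_comp_weightedLength_sub [CompleteSpace E] {γ : ℝ → E} (hF : Continuous F)
    (hF0 : ∀ x, 0 ≤ F x) (hγ : LocallyLipschitz γ) {a b : ℝ} (hab : a ≤ b) {φ : ℝ → ℝ}
    (hφ : Differentiable ℝ φ) (hφmono : Monotone φ)
    (hspeed : ∀ t ∈ Ioo a b, 1 ≤ deriv φ (weightedLength F a t γ) * F (γ t)) :
    arcLength a b γ ≤ φ (weightedLength F a b γ) - φ (weightedLength F a a γ) := by
  refine integral_le_sub_of_ae_le_deriv (u := fun t => φ (weightedLength F a t γ)) hab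
    ((hφmono.comp (monotone_weightedLength hF hF0 hγ a)).monotoneOn _)
    (intervalIntegrable_norm_deriv_of_locallyLipschitz hγ a b) ?_
  filter_upwards [ae_hasDerivAt_weightedLength hF hγ a b] with t ht hmem
  have hchain := (hφ (weightedLength F a t γ)).hasDerivAt.comp t (ht hmem)
  rw [hchain.deriv (f := fun t => φ (weightedLength F a t γ)), ← mul_assoc]
  exact le_mul_of_one_le_left (norm_nonneg _) (hspeed t hmem)

lemma IsGeodesic.abs_weightedLength_sub_le_sq [CompleteSpace E] (hF : Continuous F)
    (hF0 : ∀ x, 0 ≤ F x) (hc : 0 < c) (hC : 0 ≤ C) {ε a b s t : ℝ} (hε : 0 ≤ ε) {γ : ℝ → E}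
    {p q w : E} (hγ : IsGeodesic (fun x => F x + ε) a b γ p q) (hs : s ∈ Icc a b)
    (ht : t ∈ Icc a b) (hst : ‖γ s - w‖ ≤ ‖γ t - w‖) (hlower : c * ‖γ t - w‖ ≤ F (γ t))
    (hupper : ∀ y ∈ Metric.closedBall w ‖γ t - w‖, F y ≤ C * ‖γ t - w‖) :
    |weightedLength (fun x => F x + ε) a t γ - weightedLength (fun x => F x + ε) a s γ| ≤
      2 * (C / c + 1) / c * (F (γ t) + ε) ^ 2 := by
  set ρ := ‖γ t - w‖
  have hseg : segment ℝ (γ s) (γ t) ⊆ Metric.closedBall w ρ :=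
    (convex_closedBall w ρ).segment_subset (mem_closedBall_iff_norm.2 hst)
      (mem_closedBall_iff_norm.2 le_rfl)
  have hdist : ‖γ t - γ s‖ ≤ 2 * ρ := by
    have := norm_sub_le_norm_sub_add_norm_sub (γ t) w (γ s)
    rw [norm_sub_rev w] at this
    linarith
  have hρg : ρ ≤ (F (γ t) + ε) / c := by
    rw [le_div_iff₀' hc]
    linarith
  have hFt := hF0 (γ t)
  calc _ ≤ (C * ρ + ε) * ‖γ t - γ s‖ := hγ.abs_weightedLength_sub_le (by fun_prop)
        (fun x => add_nonneg (hF0 x) hε) hs ht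
        fun x hx => add_le_add_left (hupper x (hseg hx)) ε
    _ ≤ (C * ((F (γ t) + ε) / c) + (F (γ t) + ε)) * (2 * ((F (γ t) + ε) / c)) := by
        gcongr
        · linarith
        · linarith
    _ = 2 * (C / c + 1) / c * (F (γ t) + ε) ^ 2 := by ring

lemma IsGeodesic.arcLength_le [CompleteSpace E] (hF : Continuous F) (hF0 : ∀ x, 0 ≤ F x)
    (hZ : Z.Finite) (hc : 0 < c) (hC : 0 ≤ C) (hdich : ∀ x, WellDichotomy F Z c C x) {ε a b : ℝ}
    (hε : 0 < ε) {γ : ℝ → E} {p q : E} (hγ : IsGeodesic (fun x => F x + ε) a b γ p q) :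
    arcLength a b γ ≤ c⁻¹ * weightedDist (fun x => F x + ε) p q +
      2 * √(2 * (C / c + 1) / c + 1) *
        (hZ.toFinset.card * (2 * √(weightedDist (fun x => F x + ε) p q))) := by
  set G : E → ℝ := fun x => F x + ε
  have hG : Continuous G := by fun_prop
  have hG0 : ∀ x, 0 ≤ G x := fun x => add_nonneg (hF0 x) hε.le
  have hlip := hγ.locallyLipschitz
  choose τ hτ hnearest using exists_mem_Icc_forall_norm_sub_le hγ.le hlip.continuous
  set v : E → ℝ := fun w => weightedLength G a (τ w) γ
  have hzero : weightedLength G a a γ = 0 := intervalIntegral.integral_same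
  have hv : ∀ w ∈ hZ.toFinset, v w ∈ Icc 0 (weightedDist G p q) := fun w _ => by
    rw [← hγ.weightedLength_eq]
    exact ⟨weightedLength_nonneg hG0 (hτ w).1 γ,
      monotone_weightedLength hG hG0 hlip a (hτ w).2⟩
  have hnear : ∀ t ∈ Ioo a b, c ≤ G (γ t) ∨ ∃ w ∈ hZ.toFinset,
      |weightedLength G a t γ - v w| ≤ 2 * (C / c + 1) / c * G (γ t) ^ 2 := fun t ht => by
    refine (hdich (γ t)).imp (fun h => h.trans (le_add_of_nonneg_right hε.le)) ?_
    rintro ⟨w, hw, hlower, hupper⟩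
    have ht' := Ioo_subset_Icc_self ht
    exact ⟨w, hZ.mem_toFinset.2 hw, hγ.abs_weightedLength_sub_le_sq hF hF0 hc hC hε.le (hτ w) ht'
      (hnearest w t ht') hlower hupper⟩
  refine (arcLength_le_comp_weightedLength_sub hG hG0 hlip hγ.le
    (fun x => (hasDerivAt_lengthMajorant hZ.toFinset v c _ hε x).differentiableAt)
    (monotone_lengthMajorant hc.le (by positivity) hε) fun t ht =>
      one_le_deriv_lengthMajorant_mul hc hε (le_add_of_nonneg_left (hF0 (γ t)))
        (by positivity) (hnear t ht)).trans ?_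
  rw [hzero, hγ.weightedLength_eq]
  exact lengthMajorant_sub_le (by positivity) hv

end Wells

/-! ### Existence of geodesics -/

lemma exists_pos_le_one_add_mul_le {x z : ℝ} (h : x < z) (y : ℝ) :
    ∃ ε > 0, ε ≤ 1 ∧ x + ε * y ≤ z := by
  have hlim : Tendsto (fun ε => x + ε * y) (𝓝[>] 0) (𝓝 x) :=
    (Continuous.tendsto' (by fun_prop) 0 x (by simp)).mono_left nhdsWithin_le_nhds
  obtain ⟨ε, hε, hmem⟩ := ((hlim.eventually_le_const h).and (Ioc_mem_nhdsGT one_pos)).exists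
  exact ⟨ε, hmem.1, hmem.2, hε⟩

section Existence

variable {E : Type*} [NormedAddCommGroup E] {F : E → ℝ} {Z : Set E}

/-- A continuous conformal factor that vanishes linearly at the finitely many points of `Z`, is
positive elsewhere, and is bounded away from zero at infinity. -/
structure HasLinearWells (F : E → ℝ) (Z : Set E) : Prop where
  finite : Z.Finite
  continuous : Continuous F
  isTheta : ∀ w ∈ Z, F =Θ[𝓝 w] fun x => x - w
  pos : ∀ x ∉ Z, 0 < F x
  coercive : ∃ c > 0, ∀ᶠ x in cocompact E, c ≤ F x

namespace HasLinearWells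

lemma nonneg (hF : HasLinearWells F Z) (x : E) : 0 ≤ F x := by
  by_cases hx : x ∈ Z
  · have hzero : F x = 0 := (hF.isTheta x hx).eq_zero_iff.self_of_nhds.2 (sub_self x)
    exact hzero.ge
  · exact (hF.pos x hx).le

lemma eventually_wellDichotomy (hF : HasLinearWells F Z) (x₀ : E) :
    ∃ c > 0, ∃ C, ∀ᶠ x in 𝓝 x₀, WellDichotomy F Z c C x := by
  by_cases hx₀ : x₀ ∈ Z
  · obtain ⟨C, hC⟩ := (hF.isTheta x₀ hx₀).isBigO.bound
    obtain ⟨k, hk, hlower⟩ := (hF.isTheta x₀ hx₀).isBigO_symm.exists_pos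
    obtain ⟨r, hr, hball⟩ := Metric.eventually_nhds_iff_ball.1 (hC.and hlower.bound)
    refine ⟨k⁻¹, inv_pos.2 hk, |C|, ?_⟩
    filter_upwards [Metric.ball_mem_nhds x₀ hr] with x hx
    refine .inr ⟨x₀, hx₀, ?_, fun y hy => ?_⟩
    · rw [inv_mul_le_iff₀ hk, ← Real.norm_of_nonneg (hF.nonneg x)]
      exact (hball x hx).2
    · have hyx := mem_closedBall_iff_norm.1 hy
      have hyr := mem_ball_iff_norm.2 (hyx.trans_lt (mem_ball_iff_norm.1 hx))
      calc F y ≤ ‖F y‖ := le_abs_self _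
        _ ≤ C * ‖y - x₀‖ := (hball y hyr).1
        _ ≤ |C| * ‖x - x₀‖ := by gcongr; exact le_abs_self C
  · have hpos := hF.pos x₀ hx₀
    refine ⟨F x₀ / 2, half_pos hpos, 0, ?_⟩
    filter_upwards [hF.continuous.continuousAt.eventually_const_le (half_lt_self hpos)] with x hx
    exact .inl hx

lemma exists_forall_wellDichotomy (hF : HasLinearWells F Z) :
    ∃ c > 0, ∃ C, 0 ≤ C ∧ ∀ x, WellDichotomy F Z c C x := by
  have union : ∀ {s t : Set E}, (∃ c > 0, ∃ C, ∀ x ∈ s, WellDichotomy F Z c C x) →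
      (∃ c > 0, ∃ C, ∀ x ∈ t, WellDichotomy F Z c C x) →
      ∃ c > 0, ∃ C, ∀ x ∈ s ∪ t, WellDichotomy F Z c C x := by
    rintro s t ⟨c, hc, C, hs⟩ ⟨c', hc', C', ht⟩
    refine ⟨min c c', lt_min hc hc', max C C', ?_⟩
    rintro x (hx | hx)
    · exact (hs x hx).mono (min_le_left _ _) (le_max_left _ _)
    · exact (ht x hx).mono (min_le_right _ _) (le_max_right _ _)
  obtain ⟨k, hk, hinfty⟩ := hF.coercive
  obtain ⟨K, hK, hKF⟩ := mem_cocompact.1 hinfty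
  have hcompact : ∃ c > 0, ∃ C, ∀ x ∈ K, WellDichotomy F Z c C x := by
    refine hK.induction_on ⟨1, one_pos, 0, fun x hx => hx.elim⟩ ?_ (fun s t => union) ?_
    · rintro s t hst ⟨c, hc, C, ht⟩
      exact ⟨c, hc, C, fun x hx => ht x (hst hx)⟩
    · intro x _
      obtain ⟨c, hc, C, hx⟩ := hF.eventually_wellDichotomy x
      exact ⟨_, mem_nhdsWithin_of_mem_nhds hx, c, hc, C, fun y hy => hy⟩
  obtain ⟨c, hc, C, hall⟩ := union hcompact ⟨k, hk, 0, fun x (hx : x ∈ Kᶜ) => .inl (hKF hx)⟩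
  exact ⟨c, hc, max C 0, le_max_right _ _, fun x =>
    (hall x (by rw [union_compl_self]; trivial)).mono le_rfl (le_max_left _ _)⟩

variable [NormedSpace ℝ E]

lemma comp_continuousLinearEquiv {E' : Type*} [NormedAddCommGroup E'] [NormedSpace ℝ E']
    (hF : HasLinearWells F Z) (L : E' ≃L[ℝ] E) : HasLinearWells (F ∘ L) (L ⁻¹' Z) where
  finite := hF.finite.preimage L.injective.injOn
  continuous := hF.continuous.comp L.continuous
  isTheta w hw := by
    have hL : Tendsto L (𝓝 w) (𝓝 (L w)) := L.continuous.continuousAt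
    have hsub : (fun x => x - L w) ∘ L = fun x => L (x - w) := funext fun x => (map_sub L x w).symm
    have hF_comp := (hF.isTheta (L w) hw).isBigO.comp_tendsto hL
    have hF_comp_symm := (hF.isTheta (L w) hw).isBigO_symm.comp_tendsto hL
    rw [hsub] at hF_comp hF_comp_symm
    exact ⟨hF_comp.trans (L.isBigO_sub _ w), (L.isBigO_sub_rev _ w).trans hF_comp_symm⟩
  pos x hx := hF.pos (L x) hx
  coercive := by
    obtain ⟨c, hc, hF_large⟩ := hF.coercive
    exact ⟨c, hc, L.toHomeomorph.isClosedEmbedding.tendsto_cocompact.eventually hF_large⟩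

variable [FiniteDimensional ℝ E]

lemma exists_arcLength_le (hF : HasLinearWells F Z) (K : ℝ) :
    ∃ L, ∀ ε > 0, ∀ {a b γ p q}, IsGeodesic (fun x => F x + ε) a b γ p q →
      weightedDist (fun x => F x + ε) p q ≤ K → arcLength a b γ ≤ L := by
  obtain ⟨c, hc, C, hC, hdich⟩ := hF.exists_forall_wellDichotomy
  refine ⟨c⁻¹ * K + 2 * √(2 * (C / c + 1) / c + 1) * (hF.finite.toFinset.card * (2 * √K)),
    fun ε hε {a b γ p q} hγ hK => ?_⟩
  refine (hγ.arcLength_le hF.continuous hF.nonneg hF.finite hc hC hdich hε).trans ?_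
  gcongr

lemma exists_forall_gt_weightedDist (hF : HasLinearWells F Z) (p q : E) :
    ∃ L, ∀ m > weightedDist F p q, ∃ a b γ, IsLipschitzCurve a b γ p q ∧ arcLength a b γ ≤ L ∧
      weightedLength F a b γ ≤ m := by
  obtain ⟨a₁, b₁, γ₁, hγ₁, -⟩ :=
    exists_weightedLength_lt_of_weightedDist_lt (lt_add_one (weightedDist F p q))
  obtain ⟨L, hL⟩ := hF.exists_arcLength_le (weightedLength F a₁ b₁ γ₁ + 1 * arcLength a₁ b₁ γ₁)
  refine ⟨L, fun m hm => ?_⟩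
  obtain ⟨a₀, b₀, γ₀, hγ₀, hγ₀m⟩ := exists_weightedLength_lt_of_weightedDist_lt hm
  obtain ⟨ε, hε, hε_le_one, hεm⟩ := exists_pos_le_one_add_mul_le hγ₀m (arcLength a₀ b₀ γ₀)
  obtain ⟨a, b, γ, hγ⟩ := exists_isGeodesic_of_le (F := fun x => F x + ε)
    (hF.continuous.add continuous_const) hε (fun x => le_add_of_nonneg_left (hF.nonneg x)) p q
  have hdist_le := weightedDist_add_const_le hF.continuous hF.nonneg hε.le hγ₁
  have harc₁ := arcLength_nonneg hγ₁.le γ₁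
  refine ⟨a, b, γ, hγ.toIsLipschitzCurve, hL ε hε hγ (hdist_le.trans (by gcongr)), ?_⟩
  have harc := arcLength_nonneg hγ.le γ
  calc weightedLength F a b γ ≤ weightedLength F a b γ + ε * arcLength a b γ :=
        le_add_of_nonneg_right (by positivity)
    _ = weightedDist (fun x => F x + ε) p q := by
        rw [← hγ.weightedLength_eq, weightedLength_add_const hF.continuous hγ.locallyLipschitz]
    _ ≤ m := (weightedDist_add_const_le hF.continuous hF.nonneg hε.le hγ₀).trans hεm

end HasLinearWells

theorem exists_unconstrained_geodesic_general [NormedSpace ℝ E] [FiniteDimensional ℝ E]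
    (hF : HasLinearWells F Z) (p q : E) : ∃ a b γ, IsGeodesic F a b γ p q := by
  obtain ⟨L, hL⟩ := hF.exists_forall_gt_weightedDist p q
  obtain ⟨γ, hγ, hle⟩ := exists_isLipschitzCurve_weightedLength_le hF.continuous hF.nonneg hL
  exact ⟨0, L, γ, hγ, hle.antisymm (weightedDist_le hF.nonneg hγ)⟩

end Existence

/-! ### Nondegenerate minima -/

section NondegenerateMinimum

open Asymptotics

variable {E : Type*} [NormedAddCommGroup E] [NormedSpace ℝ E] {f : E → ℝ} {x₀ : E}

lemma isCoercive_of_forall_pos [FiniteDimensional ℝ E] {B : E →L[ℝ] E →L[ℝ] ℝ}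
    (hB : ∀ v, v ≠ 0 → 0 < B v v) : IsCoercive B := by
  have : ProperSpace E := FiniteDimensional.proper_real E
  have hcont : Continuous fun v => B v v := by fun_prop
  have hsphere : ∃ C, 0 < C ∧ ∀ v ∈ Metric.sphere (0 : E) 1, C ≤ B v v :=
    (isCompact_sphere 0 1).exists_forall_le' hcont.continuousOn
      fun v hv => hB v (Metric.ne_of_mem_sphere hv one_ne_zero)
  obtain ⟨C, hC, hCB⟩ := hsphere
  refine ⟨C, hC, fun u => ?_⟩
  rcases eq_or_ne u 0 with rfl | hu
  · simp
  have hu_norm : 0 < ‖u‖ := norm_pos_iff.2 hu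
  have hunit := hCB (‖u‖⁻¹ • u) (by simp [norm_smul, hu_norm.ne'])
  simp only [map_smul, smul_apply, smul_eq_mul] at hunit
  calc C * ‖u‖ * ‖u‖ ≤ ‖u‖⁻¹ * (‖u‖⁻¹ * B u u) * ‖u‖ * ‖u‖ := by gcongr
    _ = B u u := by field_simp

lemma isTheta_norm_sub_sq_of_isCoercive {B : E →L[ℝ] E →L[ℝ] ℝ} (hB : IsCoercive B) (x₀ : E)
    (l : Filter E) : (fun x => B (x - x₀) (x - x₀)) =Θ[l] fun x => ‖x - x₀‖ ^ 2 := by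
  obtain ⟨C, hC, hCB⟩ := hB
  constructor
  · refine .of_bound ‖B‖ (.of_forall fun x => ?_)
    rw [norm_pow, norm_norm, sq, ← mul_assoc]
    exact B.le_opNorm₂ _ _
  · refine .of_bound C⁻¹ (.of_forall fun x => ?_)
    rw [norm_pow, norm_norm, le_inv_mul_iff₀ hC, sq, ← mul_assoc]
    exact (hCB _).trans (le_abs_self _)

lemma hasFDerivAt_half_quadratic {B : E →L[ℝ] E →L[ℝ] ℝ} (hB : ∀ v w, B v w = B w v) (x₀ x : E) :
    HasFDerivAt (fun y => 1 / 2 * B (y - x₀) (y - x₀)) (B (x - x₀)) x := by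
  have hsub : HasFDerivAt (fun y => y - x₀) (.id ℝ E) x := (hasFDerivAt_id x).sub_const x₀
  refine ((B.hasFDerivAt_of_bilinear hsub hsub).const_mul (1 / 2)).congr_fderiv ?_
  ext v
  simp only [smul_apply, add_apply, ContinuousLinearMap.precompR_apply,
    ContinuousLinearMap.precompL_apply, ContinuousLinearMap.compL_apply,
    ContinuousLinearMap.comp_id, ContinuousLinearMap.id_apply, smul_eq_mul, hB v (x - x₀)]
  ring

lemma isLittleO_sub_half_fderiv_fderiv (hf : ContDiff ℝ 2 f) (hcrit : fderiv ℝ f x₀ = 0) :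
    (fun x => f x - f x₀ - 1 / 2 * fderiv ℝ (fderiv ℝ f) x₀ (x - x₀) (x - x₀)) =o[𝓝 x₀]
      fun x => ‖x - x₀‖ ^ 2 := by
  set B := fderiv ℝ (fderiv ℝ f) x₀
  have hsymm : ∀ v w, B v w = B w v := hf.contDiffAt.isSymmSndFDerivAt (by simp)
  have hderiv : ∀ x ∈ univ, HasFDerivWithinAt (fun x => f x - 1 / 2 * B (x - x₀) (x - x₀))
      (fderiv ℝ f x - B (x - x₀)) univ x := fun x _ =>
    ((hf.differentiable two_ne_zero x).hasFDerivAt.sub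
      (hasFDerivAt_half_quadratic hsymm x₀ x)).hasFDerivWithinAt
  have hsecond : HasFDerivAt (fderiv ℝ f) B x₀ :=
    ((hf.fderiv_right (m := 1) le_rfl).differentiable one_ne_zero x₀).hasFDerivAt
  have hsmall : (fun x => fderiv ℝ f x - B (x - x₀)) =o[𝓝[univ] x₀] fun x => ‖x - x₀‖ ^ 1 := by
    simpa [hcrit] using hsecond.isLittleO.norm_right
  refine (convex_univ.isLittleO_pow_succ (mem_univ x₀) hderiv hsmall).congr_left (fun x => ?_)
    |>.mono (nhdsWithin_univ x₀).ge
  simp only [sub_self, map_zero]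
  ring

lemma isTheta_norm_sub_sq_of_nondegenerate_min [FiniteDimensional ℝ E] (hf : ContDiff ℝ 2 f)
    (hmin : IsLocalMin f x₀) (hzero : f x₀ = 0)
    (hpos : ∀ v, v ≠ 0 → 0 < iteratedFDeriv ℝ 2 f x₀ ![v, v]) :
    f =Θ[𝓝 x₀] fun x => ‖x - x₀‖ ^ 2 := by
  have hcoercive : IsCoercive (fderiv ℝ (fderiv ℝ f) x₀) :=
    isCoercive_of_forall_pos fun v hv => by simpa [iteratedFDeriv_two_apply] using hpos v hv
  have hquad := (isTheta_norm_sub_sq_of_isCoercive hcoercive x₀ (𝓝 x₀)).const_mul_left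
    (c := 1 / 2) (by norm_num)
  have hsum := (isLittleO_sub_half_fderiv_fderiv hf hmin.fderiv_eq_zero).add_isTheta hquad
  simpa [Pi.add_def, hzero] using hsum

lemma sqrt_isTheta_sub_of_nondegenerate_min [FiniteDimensional ℝ E] (hf : ContDiff ℝ 2 f)
    (hnonneg : ∀ x, 0 ≤ f x) (hzero : f x₀ = 0)
    (hpos : ∀ v, v ≠ 0 → 0 < iteratedFDeriv ℝ 2 f x₀ ![v, v]) :
    (fun x => √(f x)) =Θ[𝓝 x₀] fun x => x - x₀ := by
  have hmin : IsLocalMin f x₀ := .of_forall fun x => hzero.trans_le (hnonneg x)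
  have hsqrt := (isTheta_norm_sub_sq_of_nondegenerate_min hf hmin hzero hpos).sqrt
    (.of_forall hnonneg) (.of_forall fun x => sq_nonneg ‖x - x₀‖)
  simpa only [Real.sqrt_sq (norm_nonneg _), isTheta_norm_right] using hsqrt

end NondegenerateMinimum

lemma TwoWell.hasLinearWells {W : ℝ × ℝ → ℝ} {pm pp : ℝ × ℝ} (hW : TwoWell W pm pp) :
    HasLinearWells (fun p => √(W p)) {pm, pp} where
  finite := toFinite _
  continuous := hW.smooth.continuous.sqrt
  isTheta := by
    have hsmooth : ContDiff ℝ 2 W := contDiff_infty.1 hW.smooth 2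
    rintro w (rfl | rfl)
    · exact sqrt_isTheta_sub_of_nondegenerate_min hsmooth hW.nonneg
        ((hW.zeroSet _).2 (.inl rfl)) hW.hess_m
    · exact sqrt_isTheta_sub_of_nondegenerate_min hsmooth hW.nonneg
        ((hW.zeroSet _).2 (.inr rfl)) hW.hess_p
  pos x hx := Real.sqrt_pos.2 ((hW.nonneg x).lt_of_ne fun h => hx ((hW.zeroSet x).1 h.symm))
  coercive := by
    obtain ⟨c, hc, R, hR⟩ := hW.coercive
    refine ⟨√c, Real.sqrt_pos.2 hc, ?_⟩
    filter_upwards [(tendsto_norm_cocompact_atTop (E := ℝ × ℝ)).eventually_ge_atTop R] with p hp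
    exact Real.sqrt_le_sqrt (hR p hp)

/-! ### The Euclidean plane -/

section Plane

/-- The identification of the Euclidean plane with `ℝ × ℝ`, which carries the supremum norm. -/
abbrev euclideanPlaneEquiv : WithLp 2 (ℝ × ℝ) ≃L[ℝ] ℝ × ℝ :=
  WithLp.prodContinuousLinearEquiv 2 ℝ ℝ ℝ

lemma norm_euclideanPlaneEquiv_symm (v : ℝ × ℝ) : ‖euclideanPlaneEquiv.symm v‖ = enorm2 v := by
  simp [WithLp.prod_norm_eq_of_L2, enorm2]

lemma weightedLength_euclideanPlaneEquiv_symm (F : ℝ × ℝ → ℝ) (a b : ℝ) (γ : ℝ → ℝ × ℝ) :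
    weightedLength (F ∘ euclideanPlaneEquiv) a b (euclideanPlaneEquiv.symm ∘ γ) =
      degLen F a b γ := by
  have hderiv (t : ℝ) :
      deriv (euclideanPlaneEquiv.symm ∘ γ) t = euclideanPlaneEquiv.symm (deriv γ t) := by
    simp only [← fderiv_apply_one_eq_deriv, ContinuousLinearEquiv.comp_fderiv]
    rfl
  simp only [weightedLength, degLen, hderiv, norm_euclideanPlaneEquiv_symm, Function.comp_apply,
    ContinuousLinearEquiv.apply_symm_apply]

lemma isLipschitzCurve_euclideanPlaneEquiv_symm_iff {a b : ℝ} {γ : ℝ → ℝ × ℝ} {p q : ℝ × ℝ} :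
    IsLipschitzCurve a b (euclideanPlaneEquiv.symm ∘ γ) (euclideanPlaneEquiv.symm p)
      (euclideanPlaneEquiv.symm q) ↔ IsCurve a b γ p q := by
  have hlip : LocallyLipschitz (euclideanPlaneEquiv.symm ∘ γ) ↔ LocallyLipschitz γ := by
    refine ⟨fun h => ?_, euclideanPlaneEquiv.symm.lipschitz.locallyLipschitz.comp⟩
    simpa [← Function.comp_assoc] using euclideanPlaneEquiv.lipschitz.locallyLipschitz.comp h
  constructor
  · rintro ⟨hab, hγ, ha, hb⟩
    exact ⟨hab, hlip.1 hγ, euclideanPlaneEquiv.symm.injective ha,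
      euclideanPlaneEquiv.symm.injective hb⟩
  · rintro ⟨hab, hγ, rfl, rfl⟩
    exact ⟨hab, hlip.2 hγ, rfl, rfl⟩

lemma weightedDist_euclideanPlaneEquiv_symm (F : ℝ × ℝ → ℝ) (p q : ℝ × ℝ) :
    weightedDist (F ∘ euclideanPlaneEquiv) (euclideanPlaneEquiv.symm p)
      (euclideanPlaneEquiv.symm q) =
      sInf {x | ∃ a b γ, IsCurve a b γ p q ∧ degLen F a b γ = x} := by
  simp only [weightedDist, euclideanPlaneEquiv.symm.surjective.comp_left.exists,
    isLipschitzCurve_euclideanPlaneEquiv_symm_iff, weightedLength_euclideanPlaneEquiv_symm]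

end Plane

/-- for every pair of points `p, q ∈ ℝ²`, the infimum defining the unconstrained
degenerate distance `d̄_F(p,q)` is attained by some locally Lipschitz curve joining `p` to `q`. -/
theorem exists_unconstrained_geodesic
    (W : ℝ × ℝ → ℝ) (pm pp : ℝ × ℝ) (hW : TwoWell W pm pp)
    (F : ℝ × ℝ → ℝ) (hF : F = fun p => Real.sqrt (W p)) (p q : ℝ × ℝ) :
    ∃ a b γ, IsCurve a b γ p q ∧
      degLen F a b γ =
        sInf { x | ∃ a' b' γ', IsCurve a' b' γ' p q ∧ degLen F a' b' γ' = x } := by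
  have hwells := hF ▸ hW.hasLinearWells.comp_continuousLinearEquiv euclideanPlaneEquiv
  obtain ⟨a, b, γ, hγ, hγ_min⟩ := exists_unconstrained_geodesic_general hwells
    (euclideanPlaneEquiv.symm p) (euclideanPlaneEquiv.symm q)
  obtain ⟨γ, rfl⟩ := euclideanPlaneEquiv.symm.surjective.comp_left γ
  rw [weightedLength_euclideanPlaneEquiv_symm, weightedDist_euclideanPlaneEquiv_symm] at hγ_min
  exact ⟨a, b, γ, isLipschitzCurve_euclideanPlaneEquiv_symm_iff.1 hγ, hγ_min⟩
end
end

section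
/- For every A ∈ ℝ, inf{ E(γ) : γ : [a,b] → ℝ² locally Lipschitz, γ(a) = γ(b) = (0,0), 𝒜(γ) = A } = 0. Consequently the associated quantity d_F((0,0,0),(0,0,A)) vanishes for every A, so d_F fails to be a metric on ℝ³ when the conformal factor degenerates faster than linearly at its zero. -/
open MeasureTheory Set Filter Topology
open scoped ENNReal

noncomputable section

/-- The singular Carnot–Carathéodory distance on `ℝ³` induced by the conformal factor `F`:
the infimum of degenerate lengths of locally Lipschitz planar curves joining the planar
projections of `P` and `Q` whose signed area equals the difference of third coordinates. -/
def dCC (F : ℝ × ℝ → ℝ) (P Q : ℝ × ℝ × ℝ) : ℝ :=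
  sInf { x | ∃ a b γ, IsCurve a b γ (P.1, P.2.1) (Q.1, Q.2.1) ∧
      sArea a b γ = Q.2.2 - P.2.2 ∧ degLen F a b γ = x }

/-! A closed loop scaled by `ε` and traversed `n` times has its signed area multiplied by `n ε²`.
With `ε = n^{-1/2}` the area is therefore unchanged, while `|γ'|` is of order `ε`, `F` is `o(ε)`
along the loop, and the parameter interval has length of order `n`, so that the degenerate length
is `n · o(ε) · ε = o(1)`. Applying this to an ellipse of signed area `A` gives the result for
every `F` that vanishes faster than linearly at the base point. -/

open Asymptotics

section Development

variable {F : ℝ × ℝ → ℝ} {γ : ℝ → ℝ × ℝ} {p : ℝ × ℝ} {a b T C L : ℝ}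

theorem enorm2_nonneg (v : ℝ × ℝ) : 0 ≤ enorm2 v :=
  Real.sqrt_nonneg _

theorem enorm2_le_two_mul_norm (v : ℝ × ℝ) : enorm2 v ≤ 2 * ‖v‖ := by
  have hfst : v.1 ^ 2 ≤ ‖v‖ ^ 2 := sq_le_sq' (neg_le_of_abs_le (norm_fst_le v))
    (le_of_abs_le (norm_fst_le v))
  have hsnd : v.2 ^ 2 ≤ ‖v‖ ^ 2 := sq_le_sq' (neg_le_of_abs_le (norm_snd_le v))
    (le_of_abs_le (norm_snd_le v))
  exact Real.sqrt_le_iff.2 ⟨by positivity, by nlinarith [sq_nonneg ‖v‖]⟩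

theorem isLittleO_enorm2_rpow {β : ℝ} (hβ : 1 < β) :
    (fun v => enorm2 v ^ β) =o[𝓝 0] fun v : ℝ × ℝ => v := by
  have hO : enorm2 =O[𝓝 0] fun v : ℝ × ℝ => v :=
    IsBigO.of_bound 2 <| .of_forall fun v => by
      simpa only [Real.norm_of_nonneg (enorm2_nonneg v)] using enorm2_le_two_mul_norm v
  have hlim : Tendsto (fun v => enorm2 v ^ (β - 1)) (𝓝 0) (𝓝 0) := by
    simpa only [Real.zero_rpow (sub_pos.2 hβ).ne'] using
      (hO.trans_tendsto tendsto_id).rpow_const (Or.inr (sub_pos.2 hβ).le)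
  have hmul := ((isLittleO_one_iff ℝ).2 hlim).mul_isBigO hO.norm_right
  refine (hmul.congr (fun v => ?_) fun v => one_mul _).of_norm_right
  rw [← Real.rpow_add_one' (enorm2_nonneg v) (by linarith), sub_add_cancel]

theorem degLen_nonneg (hF : ∀ q, 0 ≤ F q) (hab : a ≤ b) : 0 ≤ degLen F a b γ :=
  intervalIntegral.integral_nonneg hab fun _ _ => mul_nonneg (hF _) (enorm2_nonneg _)

theorem abs_degLen_le (hF : ∀ t ∈ uIoc a b, |F (γ t)| ≤ C)
    (hγ : ∀ t ∈ uIoc a b, enorm2 (deriv γ t) ≤ L) :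
    |degLen F a b γ| ≤ C * L * |b - a| := by
  rw [degLen, ← Real.norm_eq_abs]
  refine intervalIntegral.norm_integral_le_of_norm_le_const fun t ht => ?_
  rw [norm_mul, Real.norm_of_nonneg (enorm2_nonneg _)]
  exact mul_le_mul (hF t ht) (hγ t ht) (enorm2_nonneg _) ((abs_nonneg _).trans (hF t ht))

theorem sArea_add_smul (hγ : ContDiff ℝ 1 γ) (hab : γ a = γ b) (p : ℝ × ℝ) (ε : ℝ) :
    sArea a b (fun t => p + ε • γ t) = ε ^ 2 * sArea a b γ := by
  have hsnd : ContDiff ℝ 1 fun t => (γ t).2 := hγ.snd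
  have hdiff : Differentiable ℝ fun t => (γ t).2 := hsnd.differentiable one_ne_zero
  have hcont : Continuous (deriv fun t => (γ t).2) := hsnd.continuous_deriv le_rfl
  have hint : ∫ t in a..b, deriv (fun s => (γ s).2) t = 0 := by
    rw [intervalIntegral.integral_deriv_eq_sub (fun t _ => hdiff t)
      (hcont.intervalIntegrable a b), hab, sub_self]
  calc sArea a b (fun t => p + ε • γ t)
    _ = ∫ t in a..b, (p.1 * ε * deriv (fun s => (γ s).2) t
          + ε ^ 2 * ((γ t).1 * deriv (fun s => (γ s).2) t)) := by
      refine intervalIntegral.integral_congr fun t _ => ?_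
      have hderiv : deriv (fun s => (p + ε • γ s).2) t = ε * deriv (fun s => (γ s).2) t :=
        (((hdiff t).hasDerivAt.const_mul ε).const_add p.2).deriv
      simp only [hderiv, Prod.fst_add, Prod.smul_fst, smul_eq_mul]
      ring
    _ = ε ^ 2 * sArea a b γ := by
      rw [intervalIntegral.integral_add (Continuous.intervalIntegrable (by fun_prop) a b)
        (Continuous.intervalIntegrable (by fun_prop) a b),
        intervalIntegral.integral_const_mul, intervalIntegral.integral_const_mul, hint,
        mul_zero, zero_add, sArea]

theorem periodic_deriv {E : Type*} [NormedAddCommGroup E] [NormedSpace ℝ E] {f : ℝ → E}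
    (hf : Function.Periodic f T) : Function.Periodic (deriv f) T := fun t => by
  rw [← deriv_comp_add_const, hf.funext]

theorem sArea_nat_mul_period (hγ : ContDiff ℝ 1 γ) (hper : Function.Periodic γ T) (n : ℕ) :
    sArea 0 (n * T) γ = n * sArea 0 T γ := by
  have hcont : Continuous fun t => (γ t).1 * deriv (fun s => (γ s).2) t :=
    hγ.continuous.fst.mul (hγ.snd.continuous_deriv le_rfl)
  have hper_snd : Function.Periodic (fun t => (γ t).2) T := hper.comp Prod.snd
  have hper_form : Function.Periodic (fun t => (γ t).1 * deriv (fun s => (γ s).2) t) T :=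
    (hper.comp Prod.fst).mul (periodic_deriv hper_snd)
  simpa only [sArea, zero_add, zsmul_eq_mul, Int.cast_natCast] using
    hper_form.intervalIntegral_add_zsmul_eq n 0 (fun _ _ => hcont.intervalIntegrable _ _)

theorem exists_pos_forall_norm_le_of_periodic {E : Type*} [NormedAddCommGroup E] {f : ℝ → E}
    (hf : Continuous f) (hper : Function.Periodic f T) (hT : T ≠ 0) :
    ∃ M, 0 < M ∧ ∀ t, ‖f t‖ ≤ M := by
  obtain ⟨M, hM, hle⟩ := (hper.isBounded_of_continuous hT hf).exists_pos_norm_le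
  exact ⟨M, hM, fun t => hle _ (mem_range_self t)⟩

theorem eventually_forall_abs_comp_add_smul_le (hF : F =o[𝓝 p] fun q => q - p) {M : ℝ}
    (hM : ∀ t, ‖γ t‖ ≤ M) (hC : 0 < C) :
    ∀ᶠ ε in 𝓝 (0 : ℝ), ∀ t, |F (p + ε • γ t)| ≤ C * (|ε| * M) := by
  obtain ⟨ρ, hρ, hball⟩ := Metric.eventually_nhds_iff.1 (hF.def hC)
  have hsmall : ∀ᶠ ε in 𝓝 (0 : ℝ), |ε| * M < ρ :=
    (Continuous.tendsto' (by fun_prop) 0 0 (by simp)).eventually_lt_const hρ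
  filter_upwards [hsmall] with ε hε t
  have hnorm : ‖p + ε • γ t - p‖ ≤ |ε| * M := by
    rw [add_sub_cancel_left, norm_smul, Real.norm_eq_abs]
    exact mul_le_mul_of_nonneg_left (hM t) (abs_nonneg ε)
  calc |F (p + ε • γ t)|
    _ ≤ C * ‖p + ε • γ t - p‖ := hball (by rw [dist_eq_norm]; exact hnorm.trans_lt hε)
    _ ≤ C * (|ε| * M) := by gcongr

/-- The loop `γ` translated to `p` and scaled by `1 / √n`, the factor for which `n` turns sweep out
the same signed area as one turn of `γ`. For `n = 0` it is the constant loop at `p`. -/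
def shrunkLoop (p : ℝ × ℝ) (γ : ℝ → ℝ × ℝ) (n : ℕ) (t : ℝ) : ℝ × ℝ :=
  p + (√n)⁻¹ • γ t

theorem isCurve_shrunkLoop (hγ : ContDiff ℝ 1 γ) (hper : Function.Periodic γ T) (hT : 0 ≤ T)
    (hγ₀ : γ 0 = 0) (n : ℕ) : IsCurve 0 (n * T) (shrunkLoop p γ n) p p := by
  refine ⟨by positivity, ?_, by simp [shrunkLoop, hγ₀], ?_⟩
  · exact (contDiff_const.add (hγ.const_smul _)).locallyLipschitz
  · simp [shrunkLoop, hper.nat_mul_eq, hγ₀]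

theorem sArea_shrunkLoop (hγ : ContDiff ℝ 1 γ) (hper : Function.Periodic γ T) {n : ℕ}
    (hn : n ≠ 0) : sArea 0 (n * T) (shrunkLoop p γ n) = sArea 0 T γ := by
  have hscale : ((√n)⁻¹ : ℝ) ^ 2 * n = 1 := by
    rw [inv_pow, Real.sq_sqrt n.cast_nonneg, inv_mul_cancel₀ (Nat.cast_ne_zero.2 hn)]
  have hclosed : γ 0 = γ (n * T) := (hper.nat_mul_eq n).symm
  calc sArea 0 (n * T) (shrunkLoop p γ n)
    _ = ((√n)⁻¹ : ℝ) ^ 2 * (n * sArea 0 T γ) := by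
      rw [← sArea_nat_mul_period hγ hper]
      exact sArea_add_smul hγ hclosed p _
    _ = sArea 0 T γ := by rw [← mul_assoc, hscale, one_mul]

theorem enorm2_deriv_shrunkLoop_le (hγ : Differentiable ℝ γ) (hL : ∀ t, ‖deriv γ t‖ ≤ L)
    (n : ℕ) (t : ℝ) : enorm2 (deriv (shrunkLoop p γ n) t) ≤ 2 * ((√n)⁻¹ * L) := by
  have hderiv : deriv (shrunkLoop p γ n) t = (√n)⁻¹ • deriv γ t :=
    HasDerivAt.deriv (((hγ t).hasDerivAt.const_smul (√n : ℝ)⁻¹).const_add p)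
  calc enorm2 (deriv (shrunkLoop p γ n) t)
    _ ≤ 2 * ‖(√n)⁻¹ • deriv γ t‖ := hderiv ▸ enorm2_le_two_mul_norm _
    _ = 2 * ((√n)⁻¹ * ‖deriv γ t‖) := by
      rw [norm_smul, Real.norm_of_nonneg (inv_nonneg.2 (Real.sqrt_nonneg _))]
    _ ≤ 2 * ((√n)⁻¹ * L) := by gcongr; exact hL t

theorem tendsto_degLen_shrunkLoop (hF : F =o[𝓝 p] fun q => q - p) (hγ : ContDiff ℝ 1 γ)
    (hper : Function.Periodic γ T) (hT : 0 < T) :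
    Tendsto (fun n : ℕ => degLen F 0 (n * T) (shrunkLoop p γ n)) atTop (𝓝 0) := by
  obtain ⟨M, hM, hγM⟩ := exists_pos_forall_norm_le_of_periodic hγ.continuous hper hT.ne'
  obtain ⟨L, hL, hγL⟩ := exists_pos_forall_norm_le_of_periodic (hγ.continuous_deriv le_rfl)
    (periodic_deriv hper) hT.ne'
  have hscale : Tendsto (fun n : ℕ => ((√n)⁻¹ : ℝ)) atTop (𝓝 0) :=
    tendsto_inv_atTop_zero.comp (Real.tendsto_sqrt_atTop.comp tendsto_natCast_atTop_atTop)
  refine (isLittleO_one_iff ℝ).1 (isLittleO_iff.2 fun δ hδ => ?_)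
  have hC : 0 < δ / (2 * M * L * T) := by positivity
  filter_upwards [hscale.eventually (eventually_forall_abs_comp_add_smul_le hF hγM hC),
    eventually_ne_atTop 0] with n hFn hn
  have hsq : (√n : ℝ) ^ 2 = n := Real.sq_sqrt n.cast_nonneg
  have hpos : 0 < (√n : ℝ) := Real.sqrt_pos.2 (Nat.cast_pos.2 (Nat.pos_of_ne_zero hn))
  calc ‖degLen F 0 (n * T) (shrunkLoop p γ n)‖
    _ ≤ δ / (2 * M * L * T) * (|(√n)⁻¹| * M) * (2 * ((√n)⁻¹ * L)) * |n * T - 0| :=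
      abs_degLen_le (fun t _ => hFn t) fun t _ =>
        enorm2_deriv_shrunkLoop_le (hγ.differentiable one_ne_zero) hγL n t
    _ = δ * ‖(1 : ℝ)‖ := by
      rw [sub_zero, abs_of_pos (inv_pos.2 hpos), abs_of_nonneg (by positivity), norm_one]
      field_simp
      exact hsq.symm

/-- An ellipse through the origin, of signed area `A` over the period `2π`
(a segment when `A = 0`). -/
def ellipse (A t : ℝ) : ℝ × ℝ :=
  (Real.cos t - 1, A / Real.pi * Real.sin t)

theorem ellipse_zero (A : ℝ) : ellipse A 0 = 0 := by
  simp [ellipse]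

theorem contDiff_ellipse (A : ℝ) : ContDiff ℝ 1 (ellipse A) := by
  unfold ellipse
  fun_prop

theorem ellipse_periodic (A : ℝ) : Function.Periodic (ellipse A) (2 * Real.pi) := fun t => by
  simp only [ellipse, Real.cos_add_two_pi, Real.sin_add_two_pi]

theorem sArea_ellipse (A : ℝ) : sArea 0 (2 * Real.pi) (ellipse A) = A := by
  have hderiv (t : ℝ) : deriv (fun s => (ellipse A s).2) t = A / Real.pi * Real.cos t :=
    ((Real.hasDerivAt_sin t).const_mul _).deriv
  calc sArea 0 (2 * Real.pi) (ellipse A)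
    _ = ∫ t in (0 : ℝ)..2 * Real.pi, A / Real.pi * (Real.cos t ^ 2 - Real.cos t) := by
      refine intervalIntegral.integral_congr fun t _ => ?_
      change (Real.cos t - 1) * deriv (fun s => (ellipse A s).2) t = _
      rw [hderiv]
      ring
    _ = A / Real.pi * Real.pi := by
      rw [intervalIntegral.integral_const_mul, intervalIntegral.integral_sub
        (Continuous.intervalIntegrable (by fun_prop) _ _)
        (Continuous.intervalIntegrable (by fun_prop) _ _), integral_cos_sq, integral_cos]
      simp
    _ = A := div_mul_cancel₀ A Real.pi_ne_zero

theorem degenerate_well_inf_zero_general (hF : ∀ q, 0 ≤ F q)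
    (hFp : F =o[𝓝 p] fun q => q - p) (A : ℝ) :
    sInf { x | ∃ a b γ, IsCurve a b γ p p ∧ sArea a b γ = A ∧ degLen F a b γ = x } = 0 ∧
    ∀ z, dCC F (p.1, p.2, z) (p.1, p.2, z + A) = 0 := by
  set S := { x | ∃ a b γ, IsCurve a b γ p p ∧ sArea a b γ = A ∧ degLen F a b γ = x }
  have hnonneg : ∀ x ∈ S, 0 ≤ x := by
    rintro _ ⟨a, b, γ, hγ, -, rfl⟩
    exact degLen_nonneg hF hγ.1
  have hmem (n : ℕ) (hn : n ≠ 0) :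
      degLen F 0 (n * (2 * Real.pi)) (shrunkLoop p (ellipse A) n) ∈ S :=
    ⟨_, _, _, isCurve_shrunkLoop (contDiff_ellipse A) (ellipse_periodic A) Real.two_pi_pos.le
      (ellipse_zero A) n,
      (sArea_shrunkLoop (contDiff_ellipse A) (ellipse_periodic A) hn).trans (sArea_ellipse A), rfl⟩
  have hinf : sInf S = 0 := by
    refine le_antisymm (ge_of_tendsto (tendsto_degLen_shrunkLoop hFp (contDiff_ellipse A)
      (ellipse_periodic A) Real.two_pi_pos) ?_) (Real.sInf_nonneg hnonneg)
    filter_upwards [eventually_ne_atTop 0] with n hn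
    exact csInf_le ⟨0, hnonneg⟩ (hmem n hn)
  exact ⟨hinf, fun z => by simpa only [dCC, add_sub_cancel_left] using hinf⟩

end Development

/-- for the degenerate conformal factor `F(p) = |p|^{α/2}` with `α > 2`, closed
loops at the origin enclosing any prescribed signed area `A` have arbitrarily small degenerate
length, so `d_F((0,0,0),(0,0,A)) = 0` for every `A` and `d_F` fails to be a metric. -/
theorem degenerate_well_inf_zero (α : ℝ) (hα : 2 < α)
    (F : ℝ × ℝ → ℝ) (hF : F = fun p => enorm2 p ^ (α / 2)) (A : ℝ) :
    sInf { x | ∃ a b γ, IsCurve a b γ (0, 0) (0, 0) ∧ sArea a b γ = A ∧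
        degLen F a b γ = x } = 0 ∧
    dCC F (0, 0, 0) (0, 0, A) = 0 := by
  subst hF
  have hwell : (fun q => enorm2 q ^ (α / 2)) =o[𝓝 0] fun q : ℝ × ℝ => q - 0 := by
    simpa only [sub_zero] using isLittleO_enorm2_rpow (by linarith)
  have hinf := degenerate_well_inf_zero_general (fun q => Real.rpow_nonneg (enorm2_nonneg q) _)
    hwell A
  exact ⟨hinf.1, by simpa only [zero_add, Prod.fst_zero, Prod.snd_zero] using hinf.2 0⟩
end
end
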